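/- arXiv:1306.5434 — 4 statements merged into one kernel-verified Lean document; each statement's English description precedes it below -/
import Mathlib

section
/- There is a universal constant C ∈ (0,∞) such that the following holds. Fix two integers d,n ≥ 3 and let G be a d-regular graph (parallel edges and self-loops allowed) with |V_G| = 2n. Then there exists a 3-regular graph G* with |V_{G*}| = 36·d·n = 18·d·|V_G| such that for every metric space (X,d_X), γ₊(G*,d_X²) ≤ C·d⁴·γ(G,d_X²). -/
/-!
Replace every vertex `u` of `G` by a cycle of `m = 18 d` vertices `(u, i)`, `i : ZMod m`. Each cycle
vertex has one free slot: at most `d` of the slots over `u`, none of them at `i = 0`, are used to place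
one edge between the cycles over `u` and `v` for every pair of adjacent `u, v` (`exists_ports`), and the
other slots are closed by self-loops. This is the 3-regular graph `G*` (`starMul`).

For `f, g` on `G*`, let `A u` be the energy of the edges starting in the cycle over `u`. Every such edge
has length at most `√(A u)`, and the self-loop at `(u, 0)` makes the double cover of the cycle connected,
so all values of `f` and `g` over `u` are within `m √(A u)` of `F u = f (u, 0)` (`cluster_bound`). The
Poincaré inequality of `G` applied to `F`, and the triangle inequality along the connecting edges, then
give the inequality for `G*` with constant of order `m³ γ`, plus a term of order `m³` without `γ`
(`core_bound`). The latter is absorbed because `γ(G) ≥ 1/2` as soon as `X` has two points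
(`half_le_gamma`: test on the indicator function of a vertex). Since `m = 18 d`, the loss is of order
`d³ ≤ d⁴`.
-/

/-!
Statement 4 (Lemma 3.1 of Mendel–Naor): there is a universal constant `C > 0` such
that for all integers `d, n ≥ 3` and every `d`-regular multigraph `G` on `2n`
vertices there exists a 3-regular multigraph `G*` on `36·d·n = 18·d·|V_G|` vertices
with `γ₊(G*, d_X²) ≤ C·d⁴·γ(G, d_X²)` for every metric space `(X, d_X)`.

Multigraphs on a finite vertex type are encoded by symmetric edge multiplicity
matrices `E : V → V → ℕ`.
-/

open ENNReal

noncomputable section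

/-- The squared distance, valued in `ℝ≥0∞`. -/
def sqd {Z : Type*} (dZ : Z → Z → ℝ) (a b : Z) : ℝ≥0∞ :=
  ENNReal.ofReal (dZ a b) ^ 2

/-- The number of edges (counted with multiplicity, a self-loop counted once). -/
def numEdges {V : Type*} [Fintype V] (E : V → V → ℕ) : ℝ≥0∞ :=
  (((∑ u : V, ∑ v : V, E u v) + ∑ u : V, E u u : ℕ) : ℝ≥0∞) / 2

/-- The nonlinear spectral gap quantity `γ(G, d_Z²)`. -/
def gammaG {V Z : Type*} [Fintype V] (E : V → V → ℕ) (dZ : Z → Z → ℝ) : ℝ≥0∞ :=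
  sInf {γ : ℝ≥0∞ | ∀ f : V → Z,
    (∑ u : V, ∑ v : V, sqd dZ (f u) (f v)) / (Fintype.card V : ℝ≥0∞) ^ 2 ≤
      γ / numEdges E * ((∑ u : V, ∑ v : V, (E u v : ℝ≥0∞) * sqd dZ (f u) (f v)) / 2)}

/-- The nonlinear absolute spectral gap quantity `γ₊(G, d_Z²)` of a `d`-regular
multigraph `G`. -/
def gammaPlusG {V Z : Type*} [Fintype V] (E : V → V → ℕ) (d : ℕ) (dZ : Z → Z → ℝ) : ℝ≥0∞ :=
  sInf {γ : ℝ≥0∞ | ∀ f g : V → Z,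
    (∑ u : V, ∑ v : V, sqd dZ (f u) (g v)) / (Fintype.card V : ℝ≥0∞) ^ 2 ≤
      γ / ((Fintype.card V : ℝ≥0∞) * d) *
        ∑ u : V, ∑ v : V, (E u v : ℝ≥0∞) * sqd dZ (f u) (g v)}

/-! ### The 3-regular graph -/

/-- Slots for the edges between cycles: an involution `τ` of `V × ZMod m` that fixes every `(u, 0)` and
moves some `(u, i)` into the cycle over `v` whenever `u` and `v` are adjacent. Its fixed points are to
carry self-loops. -/
lemma exists_ports {V : Type*} [Fintype V] [DecidableEq V] (E : V → V → ℕ) (d m : ℕ) [NeZero m]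
    (hdm : d < m) (hs : ∀ u v, E u v = E v u) (hr : ∀ u, ∑ v, E u v = d) :
    ∃ τ : V × ZMod m → V × ZMod m, Function.Involutive τ ∧ (∀ u, τ (u, 0) = (u, 0)) ∧
      ∀ u v, 0 < E u v → ∃ i, (τ (u, i)).1 = v := by
  classical
  have hc : ∀ u, Nonempty ({v // 0 < E u v} ↪ {i : ZMod m // i ≠ 0}) := by
    intro u
    apply Function.Embedding.nonempty_of_card_le
    have h1 : Fintype.card {v // 0 < E u v} ≤ d := by
      rw [Fintype.card_subtype, ← hr u, Finset.card_filter]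
      apply Finset.sum_le_sum
      intro v _
      split_ifs <;> omega
    have h2 : Fintype.card {i : ZMod m // i ≠ 0} = m - 1 := by
      rw [Fintype.card_subtype_compl, ZMod.card, Fintype.card_subtype_eq]
    omega
  have hc' : ∃ c : V → V → ZMod m, (∀ u v, 0 < E u v → c u v ≠ 0) ∧
      ∀ u v v', 0 < E u v → 0 < E u v' → c u v = c u v' → v = v' := by
    refine ⟨fun u v => if h : 0 < E u v then ((hc u).some ⟨v, h⟩ : ZMod m) else 0, ?_, ?_⟩
    · intro u v h
      simp only [h, dif_pos]
      exact ((hc u).some ⟨v, h⟩).2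
    · intro u v v' h h' heq
      simp only [h, h', dif_pos] at heq
      simpa using (hc u).some.injective (Subtype.ext heq)
  obtain ⟨c, hc0, hci⟩ := hc'
  -- The slot `c u v` over `u` is reserved for the edge to the cycle over `v`.
  let τ : V × ZMod m → V × ZMod m := fun x =>
    if h : ∃ v, 0 < E x.1 v ∧ c x.1 v = x.2 then (h.choose, c h.choose x.1) else x
  have hport : ∀ u v, 0 < E u v → τ (u, c u v) = (v, c v u) := by
    intro u v huv
    have h : ∃ w, 0 < E u w ∧ c u w = c u v := ⟨v, huv, rfl⟩
    have hw : h.choose = v := hci u _ _ h.choose_spec.1 huv h.choose_spec.2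
    simp only [τ, h, dif_pos, hw]
  have hfix : ∀ x : V × ZMod m, (¬ ∃ v, 0 < E x.1 v ∧ c x.1 v = x.2) → τ x = x := by
    intro x h
    simp only [τ, h, dif_neg, not_false_eq_true]
  refine ⟨τ, ?_, ?_, ?_⟩
  · rintro ⟨u, i⟩
    by_cases h : ∃ v, 0 < E u v ∧ c u v = i
    · obtain ⟨v, huv, rfl⟩ := h
      rw [hport u v huv, hport v u (hs u v ▸ huv)]
    · have h' := hfix (u, i) h
      rw [h', h']
  · intro u
    apply hfix
    rintro ⟨v, huv, h⟩
    exact hc0 u v huv h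
  · intro u v huv
    exact ⟨c u v, by rw [hport u v huv]⟩

/-- The multiplicity matrix of `G*` on `V × ZMod m`: cycle edges in both directions, and the edge
given by the involution `τ`. -/
def starMul {V : Type*} [DecidableEq V] {m : ℕ} (τ : V × ZMod m → V × ZMod m)
    (x y : V × ZMod m) : ℕ :=
  (if y = (x.1, x.2 + 1) then 1 else 0) + (if y = (x.1, x.2 - 1) then 1 else 0)
    + (if y = τ x then 1 else 0)

lemma starMul_symm {V : Type*} [DecidableEq V] {m : ℕ} {τ : V × ZMod m → V × ZMod m}
    (hτ : Function.Involutive τ) (x y : V × ZMod m) : starMul τ x y = starMul τ y x := by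
  obtain ⟨u, i⟩ := x
  obtain ⟨v, j⟩ := y
  have h1 : ((v, j) = (u, i + 1)) ↔ ((u, i) = (v, j - 1)) := by
    simp only [Prod.mk.injEq]
    constructor <;> rintro ⟨rfl, h⟩ <;> simp [h]
  have h2 : ((v, j) = (u, i - 1)) ↔ ((u, i) = (v, j + 1)) := by
    simp only [Prod.mk.injEq]
    constructor <;> rintro ⟨rfl, h⟩ <;> simp [h]
  have h3 : ((v, j) = τ (u, i)) ↔ ((u, i) = τ (v, j)) := by
    constructor <;> intro h <;> rw [h, hτ]
  simp only [starMul, h1, h2, h3]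
  ring

lemma sum_starMul {V : Type*} [Fintype V] [DecidableEq V] {m : ℕ} [NeZero m]
    (τ : V × ZMod m → V × ZMod m) (x : V × ZMod m) : ∑ y, starMul τ x y = 3 := by
  simp [starMul, Finset.sum_add_distrib]

/-! ### Distances within a cycle, and the Poincaré inequality -/

/-- All values of `f` and `g` on the cycle over `u` are within `m * r` of `f (u, 0)`, if `r` bounds
the lengths of the cycle edges and of the self-loop at `(u, 0)`. -/
lemma cluster_bound {X : Type*} [MetricSpace X] {m : ℕ} [NeZero m] (f g : ZMod m → X) (r : ℝ)
    (hr : 0 ≤ r) (h0 : dist (f 0) (g 0) ≤ r) (h1 : ∀ i, dist (f i) (g (i + 1)) ≤ r)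
    (h2 : ∀ i, dist (f i) (g (i - 1)) ≤ r) (i : ZMod m) :
    dist (f 0) (f i) ≤ m * r ∧ dist (f 0) (g i) ≤ m * r := by
  have key : ∀ k : ℕ, dist (f 0) (f (k : ZMod m)) ≤ (k + 1) * r ∧
      dist (f 0) (g (k : ZMod m)) ≤ (k + 1) * r := by
    intro k
    induction k with
    | zero => simpa using ⟨hr, h0⟩
    | succ k ih =>
      have e1 := h1 (k : ZMod m)
      have e2 := h2 ((k : ZMod m) + 1)
      rw [add_sub_cancel_right, dist_comm] at e2
      push_cast
      constructor
      · linarith [dist_triangle (f 0) (g (k : ZMod m)) (f ((k : ZMod m) + 1))]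
      · linarith [dist_triangle (f 0) (f (k : ZMod m)) (g ((k : ZMod m) + 1))]
  have hk := key i.val
  rw [ZMod.natCast_zmod_val] at hk
  have hlt : (i.val : ℝ) + 1 ≤ m := by exact_mod_cast ZMod.val_lt i
  have := mul_le_mul_of_nonneg_right hlt hr
  exact ⟨hk.1.trans this, hk.2.trans this⟩

/-- The Poincaré constant of a regular graph on `2 * n` vertices is at least `1 / 2` for targets with
two points; `M` stands for the number of edges, which is at least `n * d`. -/
lemma half_le_gamma {V X : Type*} [Fintype V] [DecidableEq V] [MetricSpace X] (E : V → V → ℕ)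
    (n d : ℕ) (hn : 1 ≤ n) (hd : 1 ≤ d) (hV : Fintype.card V = 2 * n)
    (hs : ∀ u v, E u v = E v u) (hr : ∀ u, ∑ v, E u v = d) (γ M : ℝ) (hγ : 0 ≤ γ)
    (hM : (n : ℝ) * d ≤ M) (a b : X) (hab : a ≠ b)
    (H : ∀ F : V → X, (∑ u, ∑ v, dist (F u) (F v) ^ 2) / (2 * n : ℝ) ^ 2 ≤
      γ / M * ((∑ u, ∑ v, (E u v : ℝ) * dist (F u) (F v) ^ 2) / 2)) : 1 / 2 ≤ γ := by
  have hne : Nonempty V := Fintype.card_pos_iff.1 (by omega)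
  obtain ⟨w⟩ := hne
  have h := H (fun u => if u = w then a else b)
  set D := dist a b ^ 2 with hD
  have hDpos : 0 < D := by have := dist_pos.2 hab; positivity
  have hdist : ∀ u v : V, dist (if u = w then a else b) (if v = w then a else b) ^ 2 =
      (if u = w then D else 0) + (if v = w then D else 0)
        - 2 * (if u = w then (if v = w then D else 0) else 0) := by
    intro u v
    split_ifs <;> simp [hD, dist_comm b a]
    ring
  have hn' : (1 : ℝ) ≤ n := by exact_mod_cast hn
  have hd' : (1 : ℝ) ≤ d := by exact_mod_cast hd
  have hMpos : 0 < M := lt_of_lt_of_le (by positivity) hM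
  have hrR : ∀ u, ∑ v, (E u v : ℝ) = d := fun u => by exact_mod_cast hr u
  have hrR' : ∀ u, ∑ v, (E v u : ℝ) = d := fun u => by simp_rw [hs _ u]; exact hrR u
  have hL : ∑ u : V, ∑ v : V,
      dist (if u = w then a else b) (if v = w then a else b) ^ 2 = (4 * n - 2) * D := by
    simp only [hdist, Finset.sum_sub_distrib, Finset.sum_add_distrib, Finset.sum_const,
      Finset.card_univ, hV, ← Finset.mul_sum]
    simp
    ring
  have hR : ∑ u : V, ∑ v : V, (E u v : ℝ) *
      dist (if u = w then a else b) (if v = w then a else b) ^ 2 ≤ 2 * d * D := by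
    calc _ ≤ ∑ u : V, ∑ v : V, (E u v : ℝ) *
          ((if u = w then D else 0) + (if v = w then D else 0)) := by
          refine Finset.sum_le_sum fun u _ => Finset.sum_le_sum fun v _ => ?_
          refine mul_le_mul_of_nonneg_left ?_ (Nat.cast_nonneg _)
          rw [hdist]
          split_ifs <;> linarith
      _ = _ := by
          simp only [mul_add, Finset.sum_add_distrib, ← Finset.sum_mul, hrR]
          rw [← Finset.mul_sum, Finset.sum_comm (f := fun u v => (E u v : ℝ) * _)]
          simp only [← Finset.sum_mul, hrR', ← Finset.mul_sum]
          simp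
          ring
  rw [hL] at h
  have h2 : (4 * n - 2) * D / (2 * n : ℝ) ^ 2 ≤ γ / (n * d) * (2 * d * D / 2) := by
    refine h.trans (mul_le_mul ?_ ?_ ?_ (by positivity))
    · exact div_le_div_of_nonneg_left hγ (by positivity) hM
    · linarith
    · positivity
  have h3 : γ / (n * d) * (2 * d * D / 2) = γ * D / n := by field_simp
  rw [h3, div_le_div_iff₀ (by positivity) (by positivity)] at h2
  have h4 : 0 < D * n := by positivity
  have h5 : (4 * n - 2) * (D * n) ≤ (4 * n * γ) * (D * n) := by linarith
  have h6 := le_of_mul_le_mul_right h5 h4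
  nlinarith

/-- The two-function inequality for `G*`, comparing all pairs with the edges. The summand with `γ`
comes from distances between different cycles, the one without from distances within a cycle. -/
lemma core_bound {V X : Type*} [Fintype V] [DecidableEq V] [MetricSpace X] (E : V → V → ℕ)
    (n d m : ℕ) [NeZero m] (hn : 1 ≤ n) (hd : 1 ≤ d) (hV : Fintype.card V = 2 * n)
    (hs : ∀ u v, E u v = E v u) (hr : ∀ u, ∑ v, E u v = d) (γ M : ℝ) (hγ : 0 ≤ γ)
    (hM : (n : ℝ) * d ≤ M)
    (H : ∀ F : V → X, (∑ u, ∑ v, dist (F u) (F v) ^ 2) / (2 * n : ℝ) ^ 2 ≤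
      γ / M * ((∑ u, ∑ v, (E u v : ℝ) * dist (F u) (F v) ^ 2) / 2))
    (τ : V × ZMod m → V × ZMod m) (hτ0 : ∀ u, τ (u, 0) = (u, 0))
    (hτ : ∀ u v, 0 < E u v → ∃ i, (τ (u, i)).1 = v) (f g : V × ZMod m → X) :
    ∑ x, ∑ y, dist (f x) (g y) ^ 2 ≤
      (12 * n * m ^ 4 + 24 * n * γ * m ^ 2 * (m + 1) ^ 2) *
        ∑ x, ∑ y, (starMul τ x y : ℝ) * dist (f x) (g y) ^ 2 := by
  have hn' : (1 : ℝ) ≤ n := by exact_mod_cast hn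
  have hd' : (1 : ℝ) ≤ d := by exact_mod_cast hd
  have hMpos : 0 < M := lt_of_lt_of_le (by positivity) hM
  set q : V × ZMod m → ℝ := fun x => dist (f x) (g (x.1, x.2 + 1)) ^ 2 +
    dist (f x) (g (x.1, x.2 - 1)) ^ 2 + dist (f x) (g (τ x)) ^ 2 with hq
  have hq0 : ∀ x, 0 ≤ q x := fun x => by positivity
  set A : V → ℝ := fun u => ∑ i, q (u, i) with hA
  have hA0 : ∀ u, 0 ≤ A u := fun u => Finset.sum_nonneg fun i _ => hq0 _
  set T : ℝ := ∑ u, A u with hT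
  have hTE : ∑ x, ∑ y, (starMul τ x y : ℝ) * dist (f x) (g y) ^ 2 = T := by
    rw [hT, hA, ← Fintype.sum_prod_type]
    refine Finset.sum_congr rfl fun x _ => ?_
    simp [starMul, add_mul, Finset.sum_add_distrib, hq]
  have hT0 : 0 ≤ T := Finset.sum_nonneg fun u _ => hA0 u
  rw [hTE]
  -- Every edge starting over `u` has length at most `√(A u)`.
  have hqA : ∀ u i, q (u, i) ≤ A u := fun u i =>
    Finset.single_le_sum (f := fun i => q (u, i)) (fun i _ => hq0 _) (Finset.mem_univ i)
  have hqe : ∀ u i (y : X), dist (f (u, i)) y ^ 2 ≤ q (u, i) → dist (f (u, i)) y ≤ √(A u) :=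
    fun u i y h => Real.le_sqrt_of_sq_le (h.trans (hqA u i))
  have hsp : ∀ x y, 0 ≤ dist (f x) (g y) ^ 2 := fun x y => sq_nonneg _
  have e1 : ∀ u i, dist (f (u, i)) (g (u, i + 1)) ≤ √(A u) := fun u i =>
    hqe u i _ (by linarith [hsp (u, i) (u, i - 1), hsp (u, i) (τ (u, i)), congrFun hq (u, i)])
  have e2 : ∀ u i, dist (f (u, i)) (g (u, i - 1)) ≤ √(A u) := fun u i =>
    hqe u i _ (by linarith [hsp (u, i) (u, i + 1), hsp (u, i) (τ (u, i)), congrFun hq (u, i)])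
  have e3 : ∀ u i, dist (f (u, i)) (g (τ (u, i))) ≤ √(A u) := fun u i =>
    hqe u i _ (by linarith [hsp (u, i) (u, i + 1), hsp (u, i) (u, i - 1), congrFun hq (u, i)])
  have hcl : ∀ u i, dist (f (u, 0)) (f (u, i)) ≤ m * √(A u) ∧
      dist (f (u, 0)) (g (u, i)) ≤ m * √(A u) := fun u i =>
    cluster_bound (fun i => f (u, i)) (fun i => g (u, i)) _ (Real.sqrt_nonneg _)
      (by simpa [hτ0] using e3 u 0) (e1 u) (e2 u) i
  set F : V → X := fun u => f (u, 0) with hF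
  have hsq : ∀ u, √(A u) ^ 2 = A u := fun u => Real.sq_sqrt (hA0 u)
  have hedge : ∀ u v, (E u v : ℝ) * dist (F u) (F v) ^ 2 ≤
      (E u v : ℝ) * (2 * (m + 1) ^ 2 * (A u + A v)) := by
    intro u v
    rcases Nat.eq_zero_or_pos (E u v) with h | h
    · simp [h]
    refine mul_le_mul_of_nonneg_left ?_ (Nat.cast_nonneg _)
    obtain ⟨i, hi⟩ := hτ u v h
    have h1 := (hcl u i).1
    have h2 := e3 u i
    have h3 := (hcl v (τ (u, i)).2).2
    have h4 : (v, (τ (u, i)).2) = τ (u, i) := by rw [← hi]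
    rw [h4, dist_comm] at h3
    have h5 := dist_triangle4 (F u) (f (u, i)) (g (τ (u, i))) (F v)
    have h6 : dist (F u) (F v) ≤ (m + 1) * (√(A u) + √(A v)) := by
      have := Real.sqrt_nonneg (A v)
      linarith
    calc dist (F u) (F v) ^ 2 ≤ ((m + 1) * (√(A u) + √(A v))) ^ 2 :=
          pow_le_pow_left₀ dist_nonneg h6 2
      _ = (m + 1) ^ 2 * (√(A u) + √(A v)) ^ 2 := by ring
      _ ≤ (m + 1) ^ 2 * (2 * (√(A u) ^ 2 + √(A v) ^ 2)) :=
          mul_le_mul_of_nonneg_left add_sq_le (by positivity)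
      _ = _ := by rw [hsq, hsq]; ring
  have hrR : ∀ u, ∑ v, (E u v : ℝ) = d := fun u => by exact_mod_cast hr u
  have hrR' : ∀ u, ∑ v, (E v u : ℝ) = d := fun u => by simp_rw [hs _ u]; exact hrR u
  have hen : ∑ u, ∑ v, (E u v : ℝ) * dist (F u) (F v) ^ 2 ≤ 4 * (m + 1) ^ 2 * d * T := by
    refine (Finset.sum_le_sum fun u _ => Finset.sum_le_sum fun v _ => hedge u v).trans_eq ?_
    have h1 : ∑ u, ∑ v, (E u v : ℝ) * A u = d * T := by
      simp only [← Finset.sum_mul, hrR, ← Finset.mul_sum, hT]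
    have h2 : ∑ u, ∑ v, (E u v : ℝ) * A v = d * T := by
      rw [Finset.sum_comm]
      simp only [← Finset.sum_mul, hrR', ← Finset.mul_sum, hT]
    calc _ = 2 * (m + 1) ^ 2 * (∑ u, ∑ v, (E u v : ℝ) * A u + ∑ u, ∑ v, (E u v : ℝ) * A v) := by
          simp only [← Finset.sum_add_distrib, Finset.mul_sum]
          refine Finset.sum_congr rfl fun u _ => Finset.sum_congr rfl fun v _ => ?_
          ring
      _ = _ := by rw [h1, h2]; ring
  have hFF : ∑ u, ∑ v, dist (F u) (F v) ^ 2 ≤ 8 * n * γ * (m + 1) ^ 2 * T := by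
    have h1 : (∑ u, ∑ v, dist (F u) (F v) ^ 2) / (2 * n : ℝ) ^ 2 ≤
        γ / (n * d) * ((4 * (m + 1) ^ 2 * d * T) / 2) := by
      refine (H F).trans (mul_le_mul ?_ ?_ ?_ (by positivity))
      · exact div_le_div_of_nonneg_left hγ (by positivity) hM
      · linarith
      · positivity
    rw [div_le_iff₀ (by positivity)] at h1
    refine h1.trans_eq ?_
    field_simp
    ring
  have hpt : ∀ x y : V × ZMod m, dist (f x) (g y) ^ 2 ≤
      3 * m ^ 2 * A x.1 + 3 * dist (F x.1) (F y.1) ^ 2 + 3 * m ^ 2 * A y.1 := by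
    rintro ⟨u, i⟩ ⟨v, j⟩
    have h1 := (hcl u i).1
    have h2 := (hcl v j).2
    rw [dist_comm] at h1
    have h3 := dist_triangle4 (f (u, i)) (F u) (F v) (g (v, j))
    have h4 : dist (f (u, i)) (g (v, j)) ≤ m * √(A u) + dist (F u) (F v) + m * √(A v) := by
      linarith
    refine (pow_le_pow_left₀ dist_nonneg h4 2).trans ?_
    have h5 := hsq u
    have h6 := hsq v
    simp only
    have h7 : ∀ a b c : ℝ, (a + b + c) ^ 2 ≤ 3 * a ^ 2 + 3 * b ^ 2 + 3 * c ^ 2 := fun a b c => by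
      nlinarith [sq_nonneg (a - b), sq_nonneg (a - c), sq_nonneg (b - c)]
    refine (h7 _ _ _).trans_eq ?_
    rw [mul_pow, mul_pow, h5, h6]
    ring
  calc ∑ x, ∑ y, dist (f x) (g y) ^ 2
      ≤ ∑ x : V × ZMod m, ∑ y : V × ZMod m,
        (3 * m ^ 2 * A x.1 + 3 * dist (F x.1) (F y.1) ^ 2 + 3 * m ^ 2 * A y.1) :=
        Finset.sum_le_sum fun x _ => Finset.sum_le_sum fun y _ => hpt x y
    _ = 12 * n * m ^ 4 * T + 3 * m ^ 2 * ∑ u, ∑ v, dist (F u) (F v) ^ 2 := by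
        simp only [Fintype.sum_prod_type, Finset.sum_add_distrib, Finset.sum_const,
          Finset.card_univ, ZMod.card, Fintype.card_prod, hV, nsmul_eq_mul, ← Finset.mul_sum, ← hT]
        push_cast
        ring
    _ ≤ _ := by
        have := mul_le_mul_of_nonneg_left hFF (show (0 : ℝ) ≤ 3 * m ^ 2 by positivity)
        linarith

/-! ### From extended nonnegative reals to reals -/

lemma sqd_dist {X : Type*} [MetricSpace X] (a b : X) :
    sqd (dist : X → X → ℝ) a b = ENNReal.ofReal (dist a b ^ 2) := by
  rw [sqd, ENNReal.ofReal_pow dist_nonneg]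

lemma sum_sqd {V X : Type*} [Fintype V] [MetricSpace X] (f g : V → X) :
    ∑ u, ∑ v, sqd (dist : X → X → ℝ) (f u) (g v) =
      ENNReal.ofReal (∑ u, ∑ v, dist (f u) (g v) ^ 2) := by
  rw [ENNReal.ofReal_sum_of_nonneg fun u _ => by positivity]
  refine Finset.sum_congr rfl fun u _ => ?_
  rw [ENNReal.ofReal_sum_of_nonneg fun u _ => by positivity]
  simp only [sqd_dist]

lemma sum_mul_sqd {V X : Type*} [Fintype V] [MetricSpace X] (E : V → V → ℕ) (f g : V → X) :
    ∑ u, ∑ v, (E u v : ℝ≥0∞) * sqd (dist : X → X → ℝ) (f u) (g v) =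
      ENNReal.ofReal (∑ u, ∑ v, (E u v : ℝ) * dist (f u) (g v) ^ 2) := by
  rw [ENNReal.ofReal_sum_of_nonneg fun u _ => by positivity]
  refine Finset.sum_congr rfl fun u _ => ?_
  rw [ENNReal.ofReal_sum_of_nonneg fun u _ => by positivity]
  refine Finset.sum_congr rfl fun v _ => ?_
  rw [sqd_dist, ENNReal.ofReal_mul (Nat.cast_nonneg _), ENNReal.ofReal_natCast]

/-- Real-valued form of the condition defining `gammaG`, for a finite constant `γ`; `M` is the
number of edges. -/
lemma gammaG_real {V X : Type*} [Fintype V] [MetricSpace X] (E : V → V → ℕ) (n d : ℕ)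
    (hn : 1 ≤ n) (hd : 1 ≤ d) (hV : Fintype.card V = 2 * n) (hr : ∀ u, ∑ v, E u v = d) (γ : ℝ)
    (H : ∀ f : V → X,
      (∑ u : V, ∑ v : V, sqd dist (f u) (f v)) / (Fintype.card V : ℝ≥0∞) ^ 2 ≤
      ENNReal.ofReal γ / numEdges E *
        ((∑ u : V, ∑ v : V, (E u v : ℝ≥0∞) * sqd dist (f u) (f v)) / 2)) (hγ : 0 ≤ γ) :
    ∃ M : ℝ, (n : ℝ) * d ≤ M ∧ ∀ F : V → X,
      (∑ u, ∑ v, dist (F u) (F v) ^ 2) / (2 * n : ℝ) ^ 2 ≤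
      γ / M * ((∑ u, ∑ v, (E u v : ℝ) * dist (F u) (F v) ^ 2) / 2) := by
  have hn' : (1 : ℝ) ≤ n := by exact_mod_cast hn
  have hd' : (1 : ℝ) ≤ d := by exact_mod_cast hd
  have hk : ∑ u : V, ∑ v : V, E u v = 2 * n * d := by simp [hr, hV]
  set M : ℝ := ((2 * n * d + ∑ u, E u u : ℕ) : ℝ) / 2 with hM
  have hle : (n : ℝ) * d ≤ M := by
    rw [hM]; push_cast
    have : (0 : ℝ) ≤ ∑ u, (E u u : ℝ) := by positivity
    linarith
  have hMpos : 0 < M := lt_of_lt_of_le (by positivity) hle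
  have hnum : numEdges E = ENNReal.ofReal M := by
    rw [numEdges, hk, hM, ENNReal.ofReal_div_of_pos (by norm_num), ENNReal.ofReal_natCast]
    simp
  refine ⟨M, hle, fun F => ?_⟩
  have h := H F
  have hc : (Fintype.card V : ℝ≥0∞) ^ 2 = ENNReal.ofReal ((2 * n : ℝ) ^ 2) := by
    rw [hV, ENNReal.ofReal_pow (by positivity), ← ENNReal.ofReal_natCast]
    push_cast; rfl
  have h2 : (2 : ℝ≥0∞) = ENNReal.ofReal 2 := by simp
  rw [sum_sqd, sum_mul_sqd, hnum, hc, h2, ← ENNReal.ofReal_div_of_pos (by positivity),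
    ← ENNReal.ofReal_div_of_pos hMpos, ← ENNReal.ofReal_div_of_pos (by norm_num),
    ← ENNReal.ofReal_mul (by positivity)] at h
  exact (ENNReal.ofReal_le_ofReal_iff (by positivity)).1 h

lemma gammaPlusG_le {W X : Type*} [Fintype W] [MetricSpace X] (E : W → W → ℕ) (N : ℕ) (hN : 1 ≤ N)
    (hW : Fintype.card W = N) (c : ℝ) (hc : 0 ≤ c)
    (H : ∀ f g : W → X, 3 * ∑ u, ∑ v, dist (f u) (g v) ^ 2 ≤
      c * N * ∑ u, ∑ v, (E u v : ℝ) * dist (f u) (g v) ^ 2) :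
    gammaPlusG E 3 (dist : X → X → ℝ) ≤ ENNReal.ofReal c := by
  have hN' : (1 : ℝ) ≤ N := by exact_mod_cast hN
  refine sInf_le fun f g => ?_
  have hc1 : (Fintype.card W : ℝ≥0∞) ^ 2 = ENNReal.ofReal ((N : ℝ) ^ 2) := by
    rw [hW, ENNReal.ofReal_pow (by positivity), ← ENNReal.ofReal_natCast]
  have hc2 : (Fintype.card W : ℝ≥0∞) * (3 : ℕ) = ENNReal.ofReal ((N : ℝ) * 3) := by
    rw [hW, ENNReal.ofReal_mul (by positivity), ENNReal.ofReal_natCast]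
    simp
  rw [sum_sqd, sum_mul_sqd, hc1, hc2, ← ENNReal.ofReal_div_of_pos (by positivity),
    ← ENNReal.ofReal_div_of_pos (by positivity), ← ENNReal.ofReal_mul (by positivity)]
  refine ENNReal.ofReal_le_ofReal ?_
  have h := H f g
  rw [div_le_iff₀ (by positivity)]
  refine le_of_mul_le_mul_left (h.trans_eq ?_) (by norm_num : (0 : ℝ) < 3)
  field_simp

/-! ### The comparison of spectral gaps -/

theorem statement4 :
    ∃ C : ℝ, 0 < C ∧
      ∀ (d n : ℕ), 3 ≤ d → 3 ≤ n →
        ∀ E : Fin (2 * n) → Fin (2 * n) → ℕ,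
          (∀ u v, E u v = E v u) → (∀ u, ∑ v, E u v = d) →
          ∃ E' : Fin (36 * d * n) → Fin (36 * d * n) → ℕ,
            (∀ u v, E' u v = E' v u) ∧ (∀ u, ∑ v, E' u v = 3) ∧
            ∀ (X : Type*) [MetricSpace X],
              gammaPlusG E' 3 (dist : X → X → ℝ) ≤
                ENNReal.ofReal (C * (d : ℝ) ^ 4) * gammaG E (dist : X → X → ℝ) := by
  refine ⟨500000, by norm_num, fun d n hd hn E hs hr => ?_⟩
  have : NeZero (18 * d) := ⟨by omega⟩
  obtain ⟨τ, hτi, hτ0, hτ⟩ := exists_ports E d (18 * d) (by omega) hs hr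
  have hcard : Fintype.card (Fin (2 * n) × ZMod (18 * d)) = 36 * d * n := by
    rw [Fintype.card_prod, Fintype.card_fin, ZMod.card]
    ring
  let e : Fin (2 * n) × ZMod (18 * d) ≃ Fin (36 * d * n) := Fintype.equivFinOfCardEq hcard
  refine ⟨fun x y => starMul τ (e.symm x) (e.symm y), fun x y => starMul_symm hτi _ _,
    fun x => ?_, fun X _ => ?_⟩
  · rw [e.symm.sum_comp (fun y => starMul τ (e.symm x) y), sum_starMul]
  have hd' : (3 : ℝ) ≤ d := by exact_mod_cast hd
  have hn' : (3 : ℝ) ≤ n := by exact_mod_cast hn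
  have hC : ENNReal.ofReal (500000 * (d : ℝ) ^ 4) ≠ 0 := by
    rw [Ne, ENNReal.ofReal_eq_zero, not_le]
    positivity
  -- Moving the constant to the left reduces the claim to each admissible `γ` in the infimum.
  rw [mul_comm (ENNReal.ofReal _), ← ENNReal.div_le_iff hC ENNReal.ofReal_ne_top]
  refine le_sInf fun γ hγ => ?_
  rw [ENNReal.div_le_iff hC ENNReal.ofReal_ne_top, mul_comm γ]
  by_cases htop : γ = ⊤
  · rw [htop, ENNReal.mul_top hC]
    exact le_top
  lift γ to NNReal using htop
  rw [← ENNReal.ofReal_coe_nnreal, ← ENNReal.ofReal_mul (by positivity)]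
  rw [← ENNReal.ofReal_coe_nnreal] at hγ
  obtain ⟨M, hM, H⟩ := gammaG_real (X := X) E n d (by omega) (by omega) (Fintype.card_fin _) hr
    (γ : ℝ) hγ γ.2
  refine gammaPlusG_le _ (36 * d * n) (Nat.mul_pos (by omega) (by omega)) (Fintype.card_fin _) _
    (by positivity) fun f g => ?_
  rcases subsingleton_or_nontrivial X with hX | hX
  · simp [Subsingleton.elim _ (f ⟨0, Nat.mul_pos (by omega) (by omega)⟩)]
  obtain ⟨a, b, hab⟩ := exists_pair_ne X
  have hhalf := half_le_gamma E n d (by omega) (by omega) (Fintype.card_fin _) hs hr γ M γ.2 hM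
    a b hab H
  have hcore := core_bound E n d (18 * d) (by omega) (by omega) (Fintype.card_fin _) hs hr γ M γ.2
    hM H τ hτ0 hτ (f ∘ e) (g ∘ e)
  have hL : ∑ x, ∑ y, dist ((f ∘ e) x) ((g ∘ e) y) ^ 2 = ∑ x, ∑ y, dist (f x) (g y) ^ 2 := by
    rw [← e.sum_comp]
    exact Finset.sum_congr rfl fun x _ => e.sum_comp (fun y => dist (f (e x)) (g y) ^ 2)
  have hR : ∑ x, ∑ y, (starMul τ x y : ℝ) * dist ((f ∘ e) x) ((g ∘ e) y) ^ 2 =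
      ∑ x, ∑ y, (starMul τ (e.symm x) (e.symm y) : ℝ) * dist (f x) (g y) ^ 2 := by
    rw [← e.sum_comp]
    refine Finset.sum_congr rfl fun x _ => ?_
    rw [← e.sum_comp]
    simp
  rw [hL, hR] at hcore
  set T := ∑ x, ∑ y, (starMul τ (e.symm x) (e.symm y) : ℝ) * dist (f x) (g y) ^ 2
  have hT : 0 ≤ T := by positivity
  -- The term without `γ` is absorbed by `1 / 2 ≤ γ`, and `m + 1 ≤ 19 * d` for `m = 18 * d`.
  have hcoef : 3 * (12 * (n : ℝ) * ((18 * d : ℕ) : ℝ) ^ 4 +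
      24 * n * γ * ((18 * d : ℕ) : ℝ) ^ 2 * (((18 * d : ℕ) : ℝ) + 1) ^ 2) ≤
      500000 * (d : ℝ) ^ 4 * γ * ((36 * d * n : ℕ) : ℝ) := by
    push_cast
    have h1 : 12 * (n : ℝ) * (18 * d) ^ 4 ≤ 24 * n * γ * (18 * d) ^ 4 := by
      have : (0 : ℝ) ≤ 24 * n * (18 * d) ^ 4 := by positivity
      nlinarith
    have h2 : 24 * (n : ℝ) * γ * (18 * d) ^ 2 * (18 * d + 1) ^ 2 ≤
        24 * n * γ * (18 * d) ^ 2 * (19 * d) ^ 2 := by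
      gcongr
      linarith
    have h3 : (n : ℝ) * γ * d ^ 4 * 1 ≤ n * γ * d ^ 4 * d := by
      gcongr
      linarith
    have h4 : 0 ≤ (n : ℝ) * γ * d ^ 4 := by positivity
    nlinarith
  calc _ ≤ 3 * (_ * T) := by gcongr
    _ = (3 * _) * T := (mul_assoc _ _ _).symm
    _ ≤ _ := mul_le_mul_of_nonneg_right hcoef hT

end
end

section
/- The Euclidean cone over L_1 admits a bi-Lipschitz embedding into L_1; more precisely, c_1(Cone(L_1)) ≤ √(20π²e² + 5(e−1)²)/(2(e−1)) ≤ 11.17. -/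
/-!
A map `Φ : L₁ → L₁` with values in functions of modulus one turns distances on the cone into
something computable: if `ε, δ` are signs then `|s ε - t δ| = max s t - ε δ min s t`, so
`‖s Φ x - t Φ y‖ = |s - t| + min s t * w`, where `w = 1 - 𝔼[Φ x Φ y] = ‖Φ x - Φ y‖`. If
`w` is comparable to `min 1 ‖x - y‖`, this is comparable to the cone distance
`√((s - t)² + 2 s t (1 - cos θ))`, `θ = min π ‖x - y‖`, and `(s, x) ↦ s Φ x` is the embedding.

Such a `Φ` comes from random points. Let `A_x` be the region of `[0,1] × ℝ` between the graph of `x`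
and the axis; then `A_x ∆ A_y` is the region between the two graphs, of area `‖x - y‖`. Cut
the strip `[0,1] × ℝ` into unit squares, and choose independently in each, with probability `1/2`, a
uniform random point (and otherwise none). Let `Φ x` be the sign giving the parity of the number of
chosen points in `A_x`. Then `Φ x Φ y` is the corresponding sign for `A_x ∆ A_y`, and by independence
`w = 1 - ∏ (1 - b k)`, with `b k ∈ [0,1]` the area of `A_x ∆ A_y` in the `k`-th square. As
`∑ b k = ‖x - y‖ =: d`, it follows that `d / (1 + d) ≤ 1 - exp (-d) ≤ w ≤ min 1 d`. The points can be
defined on `[0,1]` itself (`exists_points`), the infinite product of signs is taken as a limit in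
`L₁` (`exists_limit`), and the result is `exists_sign_map`.

The bounds `cone_lower` and `cone_upper` then give distortion at most `3π/√2`, which is below
the stated constant.
-/


/-!
Statement 6 (Proposition 1.9 / inequality (11.17) of Mendel–Naor): the Euclidean
cone over `L₁` admits a bi-Lipschitz embedding into `L₁`, with distortion at most
`√(20π²e² + 5(e−1)²)/(2(e−1)) ≤ 11.17`.

The Euclidean cone is realized as the set `(0,∞) × L₁` equipped with the cone
metric (a dense subset of the completion; the distortion is unaffected by passing
to the completion).
-/

open MeasureTheory ENNReal

noncomputable section

/-- `L₁ = L₁([0,1])`. -/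
abbrev L1 : Type :=
  Lp ℝ 1 (volume.restrict (Set.Icc (0 : ℝ) 1))

/-- The Euclidean cone distance over a space with distance function `dX`:
`d((s,x),(t,y)) = √(s² + t² − 2 s t cos(min{π, d_X(x,y)}))`. -/
def coneDist {X : Type*} (dX : X → X → ℝ) (p q : ℝ × X) : ℝ :=
  Real.sqrt (p.1 ^ 2 + q.1 ^ 2 - 2 * p.1 * q.1 * Real.cos (min Real.pi (dX p.2 q.2)))

/-- The point set of the Euclidean cone over `X` (minus the cusp): `(0,∞) × X`. -/
def Cone (X : Type*) : Type _ :=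
  {p : ℝ × X // 0 < p.1}

/-- The cone distance on `Cone X`. -/
def coneD {X : Type*} (dX : X → X → ℝ) (p q : Cone X) : ℝ :=
  coneDist dX p.1 q.1

/-- The bi-Lipschitz distortion `c_{(V,d_V)}(U,d_U)`, valued in `ℝ≥0∞`: the infimum
over those `D ∈ [1,∞)` for which there are a scaling factor `s > 0` and `f : U → V`
with `s·d_U(x,y) ≤ d_V(f x, f y) ≤ D·s·d_U(x,y)` for all `x, y`. -/
def distortion {U V : Type*} (dU : U → U → ℝ) (dV : V → V → ℝ) : ℝ≥0∞ :=
  sInf {D : ℝ≥0∞ | ∃ c : ℝ, 1 ≤ c ∧ D = ENNReal.ofReal c ∧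
    ∃ (s : ℝ) (f : U → V), 0 < s ∧ ∀ x y : U,
      s * dU x y ≤ dV (f x) (f y) ∧ dV (f x) (f y) ≤ c * s * dU x y}

open ProbabilityTheory Filter Topology

/-! ### Independent random points in the unit cells of `[0,1] × ℝ` -/

/-- The uniform distribution on `[0,1]`: the underlying measure of `L1`, used as the probability
space that carries all the randomness. -/
abbrev unifI : Measure ℝ := volume.restrict (Set.Icc (0 : ℝ) 1)

instance : IsProbabilityMeasure unifI := ⟨by simp⟩

/-- Lebesgue measure on the strip `[0,1] × ℝ`, as a measure on the plane. -/
abbrev strip : Measure (ℝ × ℝ) := unifI.prod volume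

/-- The `k`-th horizontal cell `ℝ × [j, j + 1)`, where `j` runs over `ℤ` as `k` runs over `ℕ`. -/
def cell (k : ℕ) : Set (ℝ × ℝ) :=
  Set.univ ×ˢ Set.Ico ((Equiv.intEquivNat.symm k : ℤ) : ℝ) ((Equiv.intEquivNat.symm k : ℤ) + 1)

lemma measurableSet_cell (k : ℕ) : MeasurableSet (cell k) :=
  MeasurableSet.univ.prod measurableSet_Ico

lemma mem_cell {k : ℕ} {p : ℝ × ℝ} : p ∈ cell k ↔ Equiv.intEquivNat ⌊p.2⌋ = k := by
  rw [← Equiv.eq_symm_apply, Int.floor_eq_iff]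
  simp [cell]

lemma strip_cell (k : ℕ) : strip (cell k) = 1 := by
  simp [cell, Measure.prod_prod]

/-- With probability `1/2` a uniform point of `[0,1] × [j, j + 1)`, and otherwise the point `(2, 0)`,
which lies outside the strip. This laziness keeps the probability of hitting any subset of the
strip at most `1/2`, so that the expected signs below are nonnegative. -/
def law (k : ℕ) : Measure (ℝ × ℝ) :=
  (2⁻¹ : ℝ≥0∞) • strip.restrict (cell k) + (2⁻¹ : ℝ≥0∞) • Measure.dirac (2, 0)

instance (k : ℕ) : IsProbabilityMeasure (law k) :=
  ⟨by simp [law, strip_cell, ENNReal.inv_two_add_inv_two]⟩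

/-- Independent points with laws `law k`, defined on `[0,1]` itself: a countable product of
probability measures on the plane lives on a standard Borel space, hence is an image of the
uniform measure on `[0,1]`. -/
lemma exists_points : ∃ X : ℕ → ℝ → ℝ × ℝ, (∀ k, Measurable (X k)) ∧ iIndepFun X unifI ∧
    ∀ k, unifI.map (X k) = law k := by
  obtain ⟨g, hg, hmap⟩ := Measure.exists_measurable_map_eq (Measure.infinitePi law)
  have hproj : Measurable (Set.projIcc (0 : ℝ) 1 zero_le_one) := continuous_projIcc.measurable
  have hP : unifI.map (Set.projIcc (0 : ℝ) 1 zero_le_one) = volume := by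
    rw [show unifI = Measure.map ((↑) : unitInterval → ℝ) volume from
      unitInterval.measurePreserving_coe.map_eq.symm, Measure.map_map hproj measurable_subtype_coe]
    convert Measure.map_id
    ext1 x
    exact Set.projIcc_val _ x
  have hW : Measurable fun ω : ℝ ↦ g (Set.projIcc (0 : ℝ) 1 zero_le_one ω) := hg.comp hproj
  have hWmap : unifI.map (fun ω : ℝ ↦ g (Set.projIcc (0 : ℝ) 1 zero_le_one ω)) =
      Measure.infinitePi law := by
    rw [← hmap, ← hP, Measure.map_map hg hproj]
    rfl
  have hlaw : ∀ k, unifI.map (fun ω : ℝ ↦ g (Set.projIcc (0 : ℝ) 1 zero_le_one ω) k) = law k := by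
    intro k
    rw [← Measure.infinitePi_map_eval law k, ← hWmap, Measure.map_map (measurable_pi_apply k) hW]
    rfl
  have hm : ∀ k, Measurable fun ω : ℝ ↦ g (Set.projIcc (0 : ℝ) 1 zero_le_one ω) k :=
    fun k ↦ (measurable_pi_apply k).comp hW
  refine ⟨fun k ω ↦ g (Set.projIcc (0 : ℝ) 1 zero_le_one ω) k, hm, ?_, hlaw⟩
  rw [iIndepFun_iff_map_fun_eq_infinitePi_map hm]
  simp only [hlaw]
  exact hWmap

/-! ### Random signs attached to planar sets -/

/-- The sign function of a set: `-1` on `D` and `1` off `D`. -/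
def sgn (D : Set (ℝ × ℝ)) (p : ℝ × ℝ) : ℝ := 1 - 2 * D.indicator 1 p

lemma sgn_eq (D : Set (ℝ × ℝ)) (p : ℝ × ℝ) : sgn D p = 1 ∨ sgn D p = -1 := by
  by_cases h : p ∈ D <;> simp [sgn, h]; norm_num

lemma sgn_mul (A B : Set (ℝ × ℝ)) (p : ℝ × ℝ) : sgn A p * sgn B p = sgn (symmDiff A B) p := by
  by_cases hA : p ∈ A <;> by_cases hB : p ∈ B <;> simp [sgn, hA, hB, Set.mem_symmDiff]
  norm_num

lemma measurable_sgn {D : Set (ℝ × ℝ)} (hD : MeasurableSet D) : Measurable (sgn D) :=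
  measurable_const.sub (measurable_const.mul (measurable_one.indicator hD))

/-- The area of the part of `D` in the `k`-th unit cell of the strip. -/
def mass (D : Set (ℝ × ℝ)) (k : ℕ) : ℝ := strip.real (D ∩ cell k)

lemma mass_nonneg (D : Set (ℝ × ℝ)) (k : ℕ) : 0 ≤ mass D k := measureReal_nonneg

lemma mass_le_one (D : Set (ℝ × ℝ)) (k : ℕ) : mass D k ≤ 1 := by
  have h : strip (D ∩ cell k) ≤ 1 := (measure_mono Set.inter_subset_right).trans (strip_cell k).le
  exact ENNReal.toReal_le_of_le_ofReal zero_le_one (by simpa using h)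

lemma hasSum_mass {D : Set (ℝ × ℝ)} (hD : MeasurableSet D) (hfin : strip D ≠ ∞) :
    HasSum (mass D) (strip.real D) := by
  have hU : D = ⋃ k, D ∩ cell k := by
    ext p
    simp [mem_cell]
  have hs : strip D = ∑' k, strip (D ∩ cell k) := by
    conv_lhs => rw [hU]
    refine measure_iUnion (fun i j hij ↦ ?_) fun k ↦ hD.inter (measurableSet_cell k)
    refine Set.disjoint_left.2 fun p hp hq ↦ hij ?_
    exact (mem_cell.1 hp.2).symm.trans (mem_cell.1 hq.2)
  unfold Measure.real mass Measure.real
  rw [hs] at hfin ⊢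
  rw [ENNReal.tsum_toReal_eq fun k ↦ ENNReal.ne_top_of_tsum_ne_top hfin k]
  exact (ENNReal.summable_toReal hfin).hasSum

lemma law_real {D : Set (ℝ × ℝ)} (hD : MeasurableSet D) (h2 : ((2 : ℝ), (0 : ℝ)) ∉ D) (k : ℕ) :
    (law k).real D = mass D k / 2 := by
  simp [law, Measure.real, mass, Measure.restrict_apply hD, hD, h2]
  ring

lemma integral_sgn {X : ℕ → ℝ → ℝ × ℝ} (hX : ∀ k, Measurable (X k))
    (hlaw : ∀ k, unifI.map (X k) = law k) {D : Set (ℝ × ℝ)} (hD : MeasurableSet D)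
    (h2 : ((2 : ℝ), (0 : ℝ)) ∉ D) (k : ℕ) : ∫ ω, sgn D (X k ω) ∂unifI = 1 - mass D k := by
  rw [← integral_map (hX k).aemeasurable (measurable_sgn hD).aestronglyMeasurable, hlaw]
  have hi : Integrable (fun p ↦ 2 * D.indicator (1 : ℝ × ℝ → ℝ) p) (law k) :=
    ((integrable_const (1 : ℝ)).indicator hD).const_mul 2
  unfold sgn
  rw [integral_sub (integrable_const _) hi, integral_const_mul,
    integral_indicator_one hD, law_real hD h2]
  simp
  ring

/-- The sign recording the parity of the number of points `X k ω`, `k < n`, that fall in `D`. -/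
def partialSign (X : ℕ → ℝ → ℝ × ℝ) (D : Set (ℝ × ℝ)) (n : ℕ) (ω : ℝ) : ℝ :=
  ∏ k ∈ Finset.range n, sgn D (X k ω)

lemma partialSign_mul (X : ℕ → ℝ → ℝ × ℝ) (A B : Set (ℝ × ℝ)) (n : ℕ) (ω : ℝ) :
    partialSign X A n ω * partialSign X B n ω = partialSign X (symmDiff A B) n ω := by
  simp only [partialSign, ← Finset.prod_mul_distrib, sgn_mul]

lemma partialSign_eq (X : ℕ → ℝ → ℝ × ℝ) (D : Set (ℝ × ℝ)) (n : ℕ) (ω : ℝ) :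
    partialSign X D n ω = 1 ∨ partialSign X D n ω = -1 := by
  induction n with
  | zero => simp [partialSign]
  | succ n ih =>
    rw [partialSign, Finset.prod_range_succ, ← partialSign]
    rcases ih with h | h <;> rcases sgn_eq D (X n ω) with h' | h' <;> simp [h, h']

lemma measurable_partialSign {X : ℕ → ℝ → ℝ × ℝ} (hX : ∀ k, Measurable (X k))
    {D : Set (ℝ × ℝ)} (hD : MeasurableSet D) (n : ℕ) : Measurable (partialSign X D n) :=
  Finset.measurable_fun_prod _ fun k _ ↦ (measurable_sgn hD).comp (hX k)

lemma integrable_partialSign {X : ℕ → ℝ → ℝ × ℝ} (hX : ∀ k, Measurable (X k))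
    {D : Set (ℝ × ℝ)} (hD : MeasurableSet D) (n : ℕ) : Integrable (partialSign X D n) unifI := by
  refine Integrable.of_bound (measurable_partialSign hX hD n).aestronglyMeasurable 1
    (ae_of_all _ fun ω ↦ ?_)
  rcases partialSign_eq X D n ω with h | h <;> simp [h]

lemma integral_partialSign {X : ℕ → ℝ → ℝ × ℝ} (hX : ∀ k, Measurable (X k))
    (hind : iIndepFun X unifI) (hlaw : ∀ k, unifI.map (X k) = law k) {D : Set (ℝ × ℝ)}
    (hD : MeasurableSet D) (h2 : ((2 : ℝ), (0 : ℝ)) ∉ D) (n : ℕ) :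
    ∫ ω, partialSign X D n ω ∂unifI = ∏ k ∈ Finset.range n, (1 - mass D k) := by
  have h := (hind.precomp Fin.val_injective : iIndepFun (fun i : Fin n ↦ X i) unifI)
    |>.integral_fun_prod_comp (fun i ↦ (hX i).aemeasurable) (f := fun _ ↦ sgn D)
      (fun i ↦ (measurable_sgn hD).aestronglyMeasurable)
  simp only [integral_sgn hX hlaw hD h2] at h
  rw [← Fin.prod_univ_eq_prod_range, ← h]
  simp only [partialSign, Finset.prod_range]

lemma abs_smul_sign_sub {s t ε δ : ℝ} (hs : 0 ≤ s) (ht : 0 ≤ t) (hε : ε = 1 ∨ ε = -1)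
    (hδ : δ = 1 ∨ δ = -1) : |s * ε - t * δ| = max s t - min s t * (ε * δ) := by
  rcases hε with rfl | rfl <;> rcases hδ with rfl | rfl <;> rcases le_total s t with h | h <;>
    simp only [h, max_eq_left, max_eq_right, min_eq_left, min_eq_right] <;>
    first
    | rw [abs_of_nonneg (by linarith)]; ring
    | rw [abs_of_nonpos (by linarith)]; ring

lemma norm_smul_partialSign_sub {X : ℕ → ℝ → ℝ × ℝ} (hX : ∀ k, Measurable (X k))
    {A B : Set (ℝ × ℝ)} (hA : MeasurableSet A) (hB : MeasurableSet B) {s t : ℝ}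
    (hs : 0 ≤ s) (ht : 0 ≤ t) (m n : ℕ) :
    ‖s • (integrable_partialSign hX hA m).toL1 _ - t • (integrable_partialSign hX hB n).toL1 _‖ =
      max s t - min s t * ∫ ω, partialSign X A m ω * partialSign X B n ω ∂unifI := by
  have hm : Integrable (fun ω ↦ partialSign X A m ω * partialSign X B n ω) unifI := by
    refine Integrable.of_bound ((measurable_partialSign hX hA m).mul
      (measurable_partialSign hX hB n)).aestronglyMeasurable 1 (ae_of_all _ fun ω ↦ ?_)
    rcases partialSign_eq X A m ω with h | h <;> rcases partialSign_eq X B n ω with h' | h' <;>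
      simp [h, h']
  rw [← Integrable.toL1_smul, ← Integrable.toL1_smul, ← Integrable.toL1_sub,
    L1.norm_of_fun_eq_integral_norm, ← integral_const_mul]
  calc _ = ∫ ω, (max s t - min s t * (partialSign X A m ω * partialSign X B n ω)) ∂unifI :=
        integral_congr_ae (ae_of_all _ fun ω ↦ abs_smul_sign_sub hs ht
          (partialSign_eq X A m ω) (partialSign_eq X B n ω))
    _ = _ := by
        rw [integral_sub (integrable_const _) (hm.const_mul _)]
        simp

/-- For a set of finite area the signs converge in `L₁`: the `n`-th increment has norm
`mass D n`, and the total mass is finite. -/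
lemma exists_limit {X : ℕ → ℝ → ℝ × ℝ} (hX : ∀ k, Measurable (X k))
    (hlaw : ∀ k, unifI.map (X k) = law k) {D : Set (ℝ × ℝ)}
    (hD : MeasurableSet D) (h2 : ((2 : ℝ), (0 : ℝ)) ∉ D) (hfin : strip D ≠ ∞) :
    ∃ F : L1, Tendsto (fun n ↦ (integrable_partialSign hX hD n).toL1 _) atTop (𝓝 F) := by
  refine cauchySeq_tendsto_of_complete (cauchySeq_of_summable_dist ?_)
  refine (hasSum_mass hD hfin).summable.congr fun n ↦ ?_
  have h := norm_smul_partialSign_sub hX hD hD zero_le_one zero_le_one n (n + 1)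
  simp only [one_smul] at h
  rw [dist_eq_norm, h]
  have hω : ∀ ω, partialSign X D n ω * partialSign X D (n + 1) ω = sgn D (X n ω) := by
    intro ω
    rw [partialSign, partialSign, Finset.prod_range_succ, ← partialSign, ← mul_assoc]
    rcases partialSign_eq X D n ω with h | h <;> simp [h]
  simp only [hω, integral_sgn hX hlaw hD h2]
  simp

lemma one_sub_sum_le_prod {b : ℕ → ℝ} (h0 : ∀ k, 0 ≤ b k) (h1 : ∀ k, b k ≤ 1) (n : ℕ) :
    1 - ∑ k ∈ Finset.range n, b k ≤ ∏ k ∈ Finset.range n, (1 - b k) := by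
  induction n with
  | zero => simp
  | succ n ih =>
    rw [Finset.sum_range_succ, Finset.prod_range_succ]
    have hs : 0 ≤ ∑ k ∈ Finset.range n, b k := Finset.sum_nonneg fun k _ ↦ h0 k
    nlinarith [mul_le_mul_of_nonneg_right ih (sub_nonneg.2 (h1 n)), mul_nonneg hs (h0 n)]

lemma prod_le_exp {b : ℕ → ℝ} (h1 : ∀ k, b k ≤ 1) (n : ℕ) :
    ∏ k ∈ Finset.range n, (1 - b k) ≤ Real.exp (-∑ k ∈ Finset.range n, b k) := by
  rw [← Finset.sum_neg_distrib, Real.exp_sum]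
  exact Finset.prod_le_prod (fun k _ ↦ sub_nonneg.2 (h1 k)) fun k _ ↦ Real.one_sub_le_exp_neg _

/-! ### The map from `L₁` to random signs -/

/-- The region between the graphs of `f` and `g` over `[0,1]`. -/
def between (f g : ℝ → ℝ) : Set (ℝ × ℝ) :=
  {p | p.1 ∈ Set.Icc (0 : ℝ) 1 ∧ ¬(p.2 < f p.1 ↔ p.2 < g p.1)}

lemma measurableSet_between {f g : ℝ → ℝ} (hf : Measurable f) (hg : Measurable g) :
    MeasurableSet (between f g) := by
  have h1 : MeasurableSet {p : ℝ × ℝ | p.2 < f p.1} :=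
    measurableSet_lt measurable_snd (hf.comp measurable_fst)
  have h2 : MeasurableSet {p : ℝ × ℝ | p.2 < g p.1} :=
    measurableSet_lt measurable_snd (hg.comp measurable_fst)
  exact (measurable_fst measurableSet_Icc).inter (h1.iff h2).compl

lemma symmDiff_between (f g h : ℝ → ℝ) :
    symmDiff (between f h) (between g h) = between f g := by
  ext p
  simp only [between, Set.mem_symmDiff, Set.mem_ofPred_eq]
  tauto

lemma not_mem_between (f g : ℝ → ℝ) : ((2 : ℝ), (0 : ℝ)) ∉ between f g := by
  rintro ⟨h, -⟩
  norm_num at h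

lemma strip_between {f g : ℝ → ℝ} (hf : Measurable f) (hg : Measurable g) :
    strip (between f g) = ∫⁻ t, ‖f t - g t‖ₑ ∂unifI := by
  rw [strip, Measure.prod_apply (measurableSet_between hf hg)]
  refine setLIntegral_congr_fun measurableSet_Icc fun t ht ↦ ?_
  have : Prod.mk t ⁻¹' between f g = Set.Ico (min (f t) (g t)) (max (f t) (g t)) := by
    ext h
    simp only [between, Set.mem_preimage, Set.mem_ofPred_eq, ht, true_and, Set.mem_Ico]
    grind
  simp only [this, Real.volume_Ico, max_sub_min_eq_abs', ← Real.norm_eq_abs, ofReal_norm]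

/-- The map to random signs: up to constants, `x ↦ Φ x` realizes the truncated metric
`min 1 (dist x y)` by functions with values in `{-1, 1}`, so that its rescalings have distances
`|s - t| + min s t * w` with `w` comparable to `min 1 (dist x y)`. -/
lemma exists_sign_map : ∃ Φ : L1 → L1, ∀ x y : L1, ∃ w : ℝ, 0 ≤ w ∧ w ≤ 1 ∧ w ≤ dist x y ∧
    dist x y / (1 + dist x y) ≤ w ∧ ∀ s t : ℝ, 0 < s → 0 < t →
      dist (s • Φ x) (t • Φ y) = |s - t| + min s t * w := by
  obtain ⟨X, hX, hind, hlaw⟩ := exists_points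
  have hm : ∀ x : L1, Measurable (x : ℝ → ℝ) := fun x ↦ (Lp.stronglyMeasurable x).measurable
  have hmeas : ∀ x : L1, MeasurableSet (between x 0) := fun x ↦
    measurableSet_between (hm x) measurable_zero
  have hfin0 : ∀ x : L1, strip (between x 0) ≠ ∞ := by
    intro x
    rw [strip_between (hm x) measurable_zero]
    simpa using (L1.hasFiniteIntegral_coeFn x).ne
  choose Φ hΦ using fun x : L1 ↦ exists_limit hX hlaw (hmeas x) (not_mem_between x 0) (hfin0 x)
  refine ⟨Φ, fun x y ↦ ?_⟩
  have hD := measurableSet_between (hm x) (hm y)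
  have hfin : strip (between x y) = ENNReal.ofReal (dist x y) := by
    rw [strip_between (hm x) (hm y), dist_eq_norm, L1.ofReal_norm_sub_eq_lintegral]
  have hsum : HasSum (mass (between x y)) (dist x y) := by
    have := hasSum_mass hD (by simp [hfin])
    rwa [Measure.real, hfin, ENNReal.toReal_ofReal dist_nonneg] at this
  -- `w` is the case `s = t = 1`; it equals `1 - ∏ (1 - b k)`.
  set b := mass (between x y)
  have hlim : ∀ s t : ℝ, 0 < s → 0 < t → Tendsto
      (fun n ↦ max s t - min s t * ∏ k ∈ Finset.range n, (1 - b k)) atTop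
      (𝓝 (dist (s • Φ x) (t • Φ y))) := by
    intro s t hs ht
    refine (((hΦ x).const_smul s).dist ((hΦ y).const_smul t)).congr fun n ↦ ?_
    rw [dist_eq_norm, norm_smul_partialSign_sub hX (hmeas x) (hmeas y) hs.le ht.le]
    simp only [partialSign_mul, symmDiff_between]
    rw [integral_partialSign hX hind hlaw hD (not_mem_between _ _)]
  have h11 : Tendsto (fun n ↦ 1 - ∏ k ∈ Finset.range n, (1 - b k)) atTop
      (𝓝 (dist (Φ x) (Φ y))) := by
    simpa using hlim 1 1 one_pos one_pos
  have hb0 : ∀ k, 0 ≤ b k := mass_nonneg _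
  have hb1 : ∀ k, b k ≤ 1 := mass_le_one _
  have hpart := hsum.tendsto_sum_nat
  refine ⟨dist (Φ x) (Φ y), dist_nonneg, ?_, ?_, ?_, fun s t hs ht ↦ ?_⟩
  · exact le_of_tendsto' h11 fun n ↦
      sub_le_self _ (Finset.prod_nonneg fun k _ ↦ sub_nonneg.2 (hb1 k))
  · exact le_of_tendsto_of_tendsto' h11 hpart fun n ↦ by
      linarith [one_sub_sum_le_prod hb0 hb1 n]
  -- The products are at most `exp (-∑ b)`, and `1 - exp (-d) ≥ 1 - 1 / (1 + d)`.
  · have hexp : 1 - Real.exp (-dist x y) ≤ dist (Φ x) (Φ y) :=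
      le_of_tendsto_of_tendsto' (((Real.continuous_exp.tendsto _).comp hpart.neg).const_sub 1) h11
        fun n ↦ sub_le_sub_left (prod_le_exp hb1 n) 1
    refine le_trans ?_ hexp
    have hd : 0 ≤ dist x y := dist_nonneg
    have he := Real.add_one_le_exp (dist x y)
    have : Real.exp (-dist x y) ≤ (1 + dist x y)⁻¹ := by
      rw [Real.exp_neg]
      exact inv_anti₀ (by linarith) (by linarith)
    have h' : dist x y / (1 + dist x y) = 1 - (1 + dist x y)⁻¹ := by
      field_simp
      ring
    linarith
  · refine tendsto_nhds_unique (hlim s t hs ht) ?_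
    have := (h11.const_mul (min s t)).const_add |s - t|
    refine this.congr fun n ↦ ?_
    rw [← max_sub_min_eq_abs']
    ring

/-! ### Comparison with the cone metric, and the constants -/

lemma cone_lower {s t d w : ℝ} (hs : 0 < s) (ht : 0 < t) (hd : 0 ≤ d) (hw0 : 0 ≤ w) (hw1 : w ≤ 1)
    (hw : d / (1 + d) ≤ w) :
    √(s ^ 2 + t ^ 2 - 2 * s * t * Real.cos (min Real.pi d)) ≤ 3 * (|s - t| + min s t * w) := by
  wlog h : s ≤ t generalizing s t
  · have := this ht hs (le_of_not_ge h)
    rwa [abs_sub_comm, min_comm s t, add_comm (s ^ 2), mul_right_comm 2 s t]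
  obtain ⟨δ, rfl⟩ : ∃ δ, t = s + δ := ⟨t - s, by ring⟩
  have hδ : 0 ≤ δ := by linarith
  rw [min_eq_left h, show s - (s + δ) = -δ by ring, abs_neg, abs_of_nonneg hδ]
  set θ := min Real.pi d with hθ
  have hθd : θ ≤ d := min_le_right _ _
  have hθ0 : 0 ≤ θ := le_min Real.pi_pos.le hd
  have hcos : 2 * (1 - Real.cos θ) ≤ (3 * w) ^ 2 := by
    rcases le_total d 2 with h2 | h2
    · have h3 : d ≤ 3 * w := by
        rw [div_le_iff₀ (by linarith)] at hw
        nlinarith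
      have := Real.one_sub_sq_div_two_le_cos (x := θ)
      nlinarith
    · have h3 : 2 ≤ 3 * w := by
        rw [div_le_iff₀ (by linarith)] at hw
        nlinarith
      have := Real.neg_one_le_cos θ
      nlinarith
  have hq : 2 * (1 - Real.cos θ) * (s * (s + δ)) ≤ (3 * w) ^ 2 * (s * (s + δ)) :=
    mul_le_mul_of_nonneg_right hcos (by positivity)
  refine Real.sqrt_le_iff.2 ⟨by positivity, ?_⟩
  nlinarith [mul_nonneg (mul_nonneg hs.le hδ) (mul_nonneg hw0 (sub_nonneg.2 hw1)),
    mul_nonneg (mul_nonneg hs.le hδ) hw0, sq_nonneg δ]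

lemma cone_upper {s t d w : ℝ} (hs : 0 < s) (ht : 0 < t) (hw0 : 0 ≤ w) (hw1 : w ≤ 1)
    (hw : w ≤ d) :
    |s - t| + min s t * w ≤
      (Real.pi / √2) * √(s ^ 2 + t ^ 2 - 2 * s * t * Real.cos (min Real.pi d)) := by
  wlog h : s ≤ t generalizing s t
  · have := this ht hs (le_of_not_ge h)
    rwa [abs_sub_comm, min_comm s t, add_comm (s ^ 2), mul_right_comm 2 s t]
  obtain ⟨δ, rfl⟩ : ∃ δ, t = s + δ := ⟨t - s, by ring⟩
  have hδ : 0 ≤ δ := by linarith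
  rw [min_eq_left h, show s - (s + δ) = -δ by ring, abs_neg, abs_of_nonneg hδ]
  set θ := min Real.pi d with hθ
  have hpi := Real.pi_gt_three
  have hwθ : w ≤ θ := le_min (by linarith) hw
  have hcos : Real.cos θ ≤ 1 - 2 / Real.pi ^ 2 * θ ^ 2 :=
    Real.cos_le_one_sub_mul_cos_sq (by
      rw [abs_of_nonneg (hw0.trans hwθ)]; exact min_le_left _ _)
  have hc : 2 * w ^ 2 ≤ Real.pi ^ 2 * (1 - Real.cos θ) := by
    have : Real.pi ^ 2 * (2 / Real.pi ^ 2 * θ ^ 2) = 2 * θ ^ 2 := by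
      field_simp
    nlinarith [sq_nonneg Real.pi]
  rw [div_mul_eq_mul_div, le_div_iff₀ (by positivity)]
  have hq : 2 * w ^ 2 * (s * (s + δ)) ≤ Real.pi ^ 2 * (1 - Real.cos θ) * (s * (s + δ)) :=
    mul_le_mul_of_nonneg_right hc (by positivity)
  refine le_of_sq_le_sq ?_ (by positivity)
  have hrad : 0 ≤ s ^ 2 + (s + δ) ^ 2 - 2 * s * (s + δ) * Real.cos θ := by
    have := mul_nonneg (mul_pos hs ht).le (sub_nonneg.2 (Real.cos_le_one θ))
    nlinarith [sq_nonneg δ]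
  rw [mul_pow, mul_pow, Real.sq_sqrt zero_le_two, Real.sq_sqrt hrad]
  have hpi9 : 9 * δ ^ 2 ≤ Real.pi ^ 2 * δ ^ 2 :=
    mul_le_mul_of_nonneg_right (by nlinarith) (sq_nonneg δ)
  nlinarith [sq_nonneg (δ - s * w), sq_nonneg δ, mul_nonneg (mul_nonneg hs.le hδ) (sq_nonneg w)]

lemma const_lower : 3 * (Real.pi / √2) ≤
    √(20 * Real.pi ^ 2 * Real.exp 1 ^ 2 + 5 * (Real.exp 1 - 1) ^ 2) / (2 * (Real.exp 1 - 1)) := by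
  have he : 1 < Real.exp 1 := Real.one_lt_exp_iff.2 one_pos
  rw [le_div_iff₀ (by linarith)]
  refine Real.le_sqrt_of_sq_le ?_
  have h : (3 * (Real.pi / √2) * (2 * (Real.exp 1 - 1))) ^ 2 =
      18 * Real.pi ^ 2 * (Real.exp 1 - 1) ^ 2 := by
    rw [mul_pow, mul_pow, div_pow, Real.sq_sqrt zero_le_two]
    ring
  rw [h]
  have : (Real.exp 1 - 1) ^ 2 ≤ Real.exp 1 ^ 2 := by nlinarith
  nlinarith [mul_le_mul_of_nonneg_left this (sq_nonneg Real.pi), sq_nonneg (Real.exp 1 - 1),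
    mul_nonneg (sq_nonneg Real.pi) (sq_nonneg (Real.exp 1))]

lemma const_upper :
    √(20 * Real.pi ^ 2 * Real.exp 1 ^ 2 + 5 * (Real.exp 1 - 1) ^ 2) / (2 * (Real.exp 1 - 1)) ≤
      11.17 := by
  have he1 := Real.exp_one_gt_d9
  have he2 := Real.exp_one_lt_d9
  have hp := Real.pi_lt_d6
  have hp0 := Real.pi_pos
  rw [div_le_iff₀ (by linarith)]
  refine Real.sqrt_le_iff.2 ⟨by linarith, ?_⟩
  -- After squaring, the claim is `20 (π e)² ≤ (4 * 11.17² - 5) (e - 1)²`, and `4.9702` lies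
  -- just below the square root of `(4 * 11.17² - 5) / 20`.
  have h : Real.pi * Real.exp 1 ≤ 4.9702 * (Real.exp 1 - 1) := by nlinarith
  have h2 : (Real.pi * Real.exp 1) ^ 2 ≤ (4.9702 * (Real.exp 1 - 1)) ^ 2 :=
    pow_le_pow_left₀ (by positivity) h 2
  nlinarith [sq_nonneg (Real.exp 1 - 1)]

theorem statement6 :
    distortion (coneD (dist : L1 → L1 → ℝ)) (dist : L1 → L1 → ℝ) ≤
        ENNReal.ofReal
          (Real.sqrt (20 * Real.pi ^ 2 * Real.exp 1 ^ 2 + 5 * (Real.exp 1 - 1) ^ 2) /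
            (2 * (Real.exp 1 - 1))) ∧
      Real.sqrt (20 * Real.pi ^ 2 * Real.exp 1 ^ 2 + 5 * (Real.exp 1 - 1) ^ 2) /
          (2 * (Real.exp 1 - 1)) ≤ 11.17 := by
  refine ⟨sInf_le ?_, const_upper⟩
  obtain ⟨Φ, hΦ⟩ := exists_sign_map
  have h2 : (1 : ℝ) ≤ Real.pi / √2 := by
    rw [le_div_iff₀ (by positivity), one_mul]
    exact Real.sqrt_le_iff.2 ⟨Real.pi_pos.le, by nlinarith [Real.pi_gt_three]⟩
  refine ⟨_, by linarith [const_lower], rfl, 1 / 3, fun p ↦ p.1.1 • Φ p.1.2, by norm_num, ?_⟩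
  rintro ⟨⟨s, x⟩, hs⟩ ⟨⟨t, y⟩, ht⟩
  obtain ⟨w, hw0, hw1, hwd, hdw, h⟩ := hΦ x y
  simp only [coneD, coneDist]
  rw [h s t hs ht]
  constructor
  · linarith [cone_lower hs ht dist_nonneg hw0 hw1 hdw]
  · refine (cone_upper hs ht hw0 hw1 hwd).trans ?_
    refine mul_le_mul_of_nonneg_right ?_ (Real.sqrt_nonneg _)
    linarith [const_lower]

end
end

section
/- There is a universal constant C ∈ (0,∞) such that every metric space (X,d_X) satisfies c_1(Cone(X)) ≤ C·c_1(X). -/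
/-!
If `x ↦ f x` embeds `X` into `L₁` with distortion `c`, the cone is embedded by
`(s, x) ↦ s · g(f x)`, where `g` maps `L₁` to the unit sphere of `L₁` with
`‖g(u) - g(v)‖` comparable to `min(1, ‖u - v‖)`. Since `‖g‖ = 1`, the distance
`‖s g(u) - t g(v)‖` is comparable to `|s - t| + min(s, t) min(1, ‖u - v‖)`, and the cone distance
is comparable to `|s - t| + min(s, t) min(1, d(x, y))`.

The map `g` is a Poisson process. A function `u ∈ L₁([0,1])` is identified with the region
`A ⊆ [0,1] × ℝ` between its graph and the axis, so that `‖u - v‖ = |A ∆ B|`, and `g(u)` is the law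
of the Poisson process of intensity `1_A`, viewed as the density
`e^{-|A|} 1_{⊔ₙ Aⁿ}` with respect to the measure `∑ₙ (Lebesgue)ⁿ / n!` on finite sequences.
The measure of `⊔ₙ Aⁿ` is `e^{|A|}` (`fockMeasure_fockSet`), and
`⊔ₙ (A ∩ B)ⁿ = (⊔ₙ Aⁿ) ∩ (⊔ₙ Bⁿ)`, whence
`‖s g(u) - t g(v)‖ = s + t - 2 min(s e^{-|A \ B|}, t e^{-|B \ A|})`
(`integral_abs_fockVec_sub`). The sequence space is standard Borel and the measure on it σ-finite,
so its `L₁` embeds isometrically into `L₁([0,1])` (`exists_isometric_L1`). The rest is the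
elementary inequality `cone_compare`.
-/

/-!
Statement 7 (Corollary 3.5 of Mendel–Naor): there is a universal constant `C` such
that every metric space `(X, d_X)` satisfies `c₁(Cone(X)) ≤ C · c₁(X)`.

The Euclidean cone is realized as the set `(0,∞) × X` equipped with the cone
metric (a dense subset of the completion; the distortion is unaffected by passing
to the completion).
-/

open MeasureTheory ENNReal

noncomputable section

/-! ### Embedding into `L₁([0,1])` -/

lemma exists_measurePreserving_Icc {Y : Type*} [Nonempty Y] [MeasurableSpace Y]
    [StandardBorelSpace Y] (ν : Measure Y) [IsProbabilityMeasure ν] :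
    ∃ φ : ℝ → Y, MeasurePreserving φ (volume.restrict (Set.Icc (0 : ℝ) 1)) ν := by
  obtain ⟨f, hf, hmap⟩ := Measure.exists_measurable_map_eq ν
  have hproj : Measurable (Set.projIcc (0 : ℝ) 1 zero_le_one) := continuous_projIcc.measurable
  refine ⟨f ∘ Set.projIcc 0 1 zero_le_one, hf.comp hproj, ?_⟩
  rw [← map_comap_subtype_coe measurableSet_Icc volume,
    Measure.map_map (hf.comp hproj) measurable_subtype_coe, ← hmap, unitInterval.volume_def]
  congr 1
  funext x
  simp

/-- Every `L₁(M)` with `M` σ-finite on a standard Borel space embeds isometrically into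
`L₁([0,1])`: write `M` with a density with respect to an equivalent probability measure, and
realize that probability measure as an image of Lebesgue measure on `[0,1]`. The map is defined on
all functions, with value `0` on non-integrable ones. -/
lemma exists_isometric_L1 {Y : Type*} [Nonempty Y] [MeasurableSpace Y]
    [StandardBorelSpace Y] (M : Measure Y) [SigmaFinite M] [NeZero M] :
    ∃ J : (Y → ℝ) → L1, ∀ u v : Y → ℝ, Integrable u M → Integrable v M →
      dist (J u) (J v) = ∫ y, |u y - v y| ∂M := by
  classical
  set ν := M.toFinite
  have hac : M ≪ ν := absolutelyContinuous_toFinite M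
  obtain ⟨φ, hφ⟩ := exists_measurePreserving_Icc ν
  let T : (Y → ℝ) → ℝ → ℝ := fun u => (fun y => (M.rnDeriv ν y).toReal • u y) ∘ φ
  have hT : ∀ u, Integrable u M → Integrable (T u) (volume.restrict (Set.Icc (0 : ℝ) 1)) :=
    fun u hu => hφ.integrable_comp_of_integrable ((integrable_rnDeriv_smul_iff hac).2 hu)
  refine ⟨fun u => if h : Integrable u M then (hT u h).toL1 _ else 0, fun u v hu hv => ?_⟩
  have huv : Integrable (fun y => |u y - v y|) M := (hu.sub hv).abs
  simp only [hu, hv, dif_pos]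
  rw [dist_eq_norm, ← Integrable.toL1_sub, L1.norm_of_fun_eq_integral_norm,
    ← integral_rnDeriv_smul hac, ← hφ.map_eq, integral_map hφ.measurable.aemeasurable]
  · refine integral_congr_ae (.of_forall fun x => ?_)
    simp only [T, Pi.sub_apply, Function.comp, smul_eq_mul, Real.norm_eq_abs, ← mul_sub, abs_mul,
      ENNReal.abs_toReal, hφ.map_eq]
  · rw [hφ.map_eq]
    exact ((integrable_rnDeriv_smul_iff hac).2 huv).aestronglyMeasurable

/-! ### The unnormalized Poisson point process -/

/-- The finite sequences with all terms in `A`. A sequence `(x₀, …, xₙ₋₁)` is encoded as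
`(n, x)` with `x : ℕ → Ω`, only the first `n` values being relevant; this keeps the ambient space
`ℕ × (ℕ → Ω)` standard Borel. -/
def fockSet {Ω : Type*} (A : Set Ω) : Set (ℕ × (ℕ → Ω)) :=
  {p | ∀ i < p.1, p.2 i ∈ A}

/-- The encoding of an `n`-tuple in `ℕ × (ℕ → Ω)`, extended by a default value. -/
def pad {Ω : Type*} [Inhabited Ω] (n : ℕ) (x : Fin n → Ω) : ℕ × (ℕ → Ω) :=
  (n, fun i => if h : i < n then x ⟨i, h⟩ else default)

/-- The measure `∑ₙ μⁿ / n!` on finite sequences. Its restriction to `fockSet A`, multiplied by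
`e^{-μ(A)}`, is the law of the Poisson process of intensity `μ` restricted to `A`. -/
def fockMeasure {Ω : Type*} [Inhabited Ω] [MeasurableSpace Ω] (μ : Measure Ω) [SigmaFinite μ] :
    Measure (ℕ × (ℕ → Ω)) :=
  Measure.sum fun n : ℕ =>
    ENNReal.ofReal (1 / n.factorial : ℝ) • (Measure.pi fun _ : Fin n => μ).map (pad n)

lemma fockSet_inter {Ω : Type*} (A B : Set Ω) : fockSet (A ∩ B) = fockSet A ∩ fockSet B := by
  ext p
  simp only [fockSet, Set.mem_ofPred_eq, Set.mem_inter_iff]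
  exact ⟨fun h => ⟨fun i hi => (h i hi).1, fun i hi => (h i hi).2⟩,
    fun h i hi => ⟨h.1 i hi, h.2 i hi⟩⟩

section Fock

variable {Ω : Type*} [MeasurableSpace Ω]

lemma measurableSet_fockSet {A : Set Ω} (hA : MeasurableSet A) : MeasurableSet (fockSet A) := by
  have : fockSet A = ⋂ i : ℕ, {p : ℕ × (ℕ → Ω) | i < p.1}ᶜ ∪ {p | p.2 i ∈ A} := by
    ext p
    simp only [fockSet, Set.mem_ofPred_eq, Set.mem_iInter, Set.mem_union, Set.mem_compl_iff]
    exact forall_congr' fun i => imp_iff_not_or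
  rw [this]
  refine MeasurableSet.iInter fun i => MeasurableSet.union (MeasurableSet.compl ?_) ?_
  · exact measurable_fst (measurableSet_Ioi (a := i))
  · exact ((measurable_pi_apply i).comp measurable_snd) hA

variable [Inhabited Ω]

lemma measurable_pad (n : ℕ) : Measurable (pad n : (Fin n → Ω) → ℕ × (ℕ → Ω)) := by
  refine measurable_const.prodMk (measurable_pi_lambda _ fun i => ?_)
  by_cases h : i < n
  · simpa [h] using measurable_pi_apply _
  · simp [h]

variable (μ : Measure Ω) [SigmaFinite μ]

lemma fockMeasure_fockSet {A : Set Ω} (hA : MeasurableSet A) (hfin : μ A ≠ ∞) :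
    fockMeasure μ (fockSet A) = ENNReal.ofReal (Real.exp (μ.real A)) := by
  have hpre : ∀ n, pad n ⁻¹' fockSet A = Set.univ.pi fun _ : Fin n => A := by
    intro n
    ext x
    simp only [fockSet, pad, Set.mem_preimage, Set.mem_ofPred_eq, Set.mem_pi, Set.mem_univ,
      forall_const]
    exact ⟨fun h i => by simpa using h i i.2, fun h i hi => by simpa [hi] using h ⟨i, hi⟩⟩
  have hsum : HasSum (fun n : ℕ => μ.real A ^ n / n.factorial) (Real.exp (μ.real A)) := by
    rw [Real.exp_eq_exp_ℝ]
    exact NormedSpace.expSeries_div_hasSum_exp _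
  rw [fockMeasure, Measure.sum_apply _ (measurableSet_fockSet hA), ← hsum.tsum_eq,
    ENNReal.ofReal_tsum_of_nonneg (fun n => by positivity) hsum.summable]
  refine tsum_congr fun n => ?_
  rw [Measure.smul_apply, Measure.map_apply (measurable_pad n) (measurableSet_fockSet hA), hpre,
    Measure.pi_pi, Finset.prod_const, Finset.card_univ, Fintype.card_fin, smul_eq_mul,
    ← ofReal_measureReal hfin, ← ENNReal.ofReal_pow measureReal_nonneg,
    ← ENNReal.ofReal_mul (by positivity), one_div_mul_eq_div]

instance : NeZero (fockMeasure μ) := by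
  refine ⟨fun h => ?_⟩
  have := fockMeasure_fockSet μ MeasurableSet.empty (by simp)
  simp [h] at this

instance : SigmaFinite (fockMeasure μ) := by
  have hmono := monotone_spanningSets μ
  refine Measure.sigmaFinite_of_countable (S := Set.range fun k => fockSet (spanningSets μ k))
    (Set.countable_range _) ?_ ?_
  · rintro _ ⟨k, rfl⟩
    dsimp only
    rw [fockMeasure_fockSet μ (measurableSet_spanningSets μ k) (measure_spanningSets_lt_top μ k).ne]
    exact ENNReal.ofReal_lt_top
  · refine Set.eq_univ_of_forall fun p => ?_
    have h : ∀ i, ∃ k, p.2 i ∈ spanningSets μ k := fun i => by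
      rw [← Set.mem_iUnion, iUnion_spanningSets]
      exact Set.mem_univ _
    choose k hk using h
    refine Set.mem_sUnion.2 ⟨_, ⟨(Finset.range p.1).sup k, rfl⟩, fun i hi => ?_⟩
    exact hmono (Finset.le_sup (Finset.mem_range.2 hi)) (hk i)

/-- The density, with respect to `fockMeasure μ`, of the law of the Poisson process with
intensity `1_A μ`. -/
def fockVec (A : Set Ω) : ℕ × (ℕ → Ω) → ℝ :=
  (fockSet A).indicator fun _ => Real.exp (-μ.real A)

lemma integrable_fock_indicator {A : Set Ω} (hA : MeasurableSet A) (hfin : μ A ≠ ∞) (r : ℝ) :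
    Integrable ((fockSet A).indicator fun _ => r) (fockMeasure μ) := by
  refine (integrable_indicator_iff (measurableSet_fockSet hA)).2 (integrableOn_const ?_)
  rw [fockMeasure_fockSet μ hA hfin]
  exact ENNReal.ofReal_ne_top

lemma integrable_fockVec {A : Set Ω} (hA : MeasurableSet A) (hfin : μ A ≠ ∞) :
    Integrable (fockVec μ A) (fockMeasure μ) :=
  integrable_fock_indicator μ hA hfin _

lemma integral_fock_indicator {A : Set Ω} (hA : MeasurableSet A) (hfin : μ A ≠ ∞) (r : ℝ) :
    ∫ y, (fockSet A).indicator (fun _ => r) y ∂(fockMeasure μ) = Real.exp (μ.real A) * r := by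
  rw [integral_indicator_const _ (measurableSet_fockSet hA), Measure.real,
    fockMeasure_fockSet μ hA hfin, ENNReal.toReal_ofReal (Real.exp_pos _).le, smul_eq_mul]

/-- The `L₁` distance of two scaled Poisson densities is explicit, because both are multiples of
indicators: `|α 1_P - β 1_Q| = α 1_P + β 1_Q - 2 min(α, β) 1_{P ∩ Q}`. -/
lemma integral_abs_fockVec_sub {A B : Set Ω} (hA : MeasurableSet A) (hB : MeasurableSet B)
    (hAf : μ A ≠ ∞) (hBf : μ B ≠ ∞) {s t : ℝ} (hs : 0 ≤ s) (ht : 0 ≤ t) :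
    ∫ y, |s * fockVec μ A y - t * fockVec μ B y| ∂(fockMeasure μ) =
      s + t - 2 * min (s * Real.exp (-μ.real A)) (t * Real.exp (-μ.real B)) *
        Real.exp (μ.real (A ∩ B)) := by
  set α := s * Real.exp (-μ.real A) with hα
  set β := t * Real.exp (-μ.real B) with hβ
  have hα0 : 0 ≤ α := by positivity
  have hβ0 : 0 ≤ β := by positivity
  have hCf : μ (A ∩ B) ≠ ∞ := measure_ne_top_of_subset Set.inter_subset_left hAf
  have hpt : ∀ y, |s * fockVec μ A y - t * fockVec μ B y| =
      (fockSet A).indicator (fun _ => α) y + (fockSet B).indicator (fun _ => β) y -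
        (fockSet (A ∩ B)).indicator (fun _ => 2 * min α β) y := by
    intro y
    rw [fockSet_inter]
    by_cases h1 : y ∈ fockSet A <;> by_cases h2 : y ∈ fockSet B <;>
      simp [fockVec, h1, h2, ← hα, ← hβ, abs_of_nonneg hα0, abs_of_nonneg hβ0]
    rcases le_total α β with h | h
    · rw [min_eq_left h, abs_of_nonpos (by linarith)]; ring
    · rw [min_eq_right h, abs_of_nonneg (by linarith)]; ring
  simp_rw [hpt]
  have i1 := integrable_fock_indicator μ hA hAf α
  have i2 := integrable_fock_indicator μ hB hBf β
  have i3 := integrable_fock_indicator μ (hA.inter hB) hCf (2 * min α β)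
  have hsub := integral_sub (i1.add i2) i3
  simp only [Pi.add_apply] at hsub
  rw [hsub, integral_add i1 i2, integral_fock_indicator μ hA hAf,
    integral_fock_indicator μ hB hBf, integral_fock_indicator μ (hA.inter hB) hCf]
  have e1 : Real.exp (μ.real A) * α = s := by
    rw [hα, mul_left_comm, ← Real.exp_add]; simp
  have e2 : Real.exp (μ.real B) * β = t := by
    rw [hβ, mul_left_comm, ← Real.exp_add]; simp
  rw [e1, e2]
  ring

end Fock

/-! ### `L₁` functions as sets of finite measure -/

/-- The region between the graph of `f` and the horizontal axis. It has finite measure when `f`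
is integrable, and `L₁` distances become measures of symmetric differences. -/
def subgraph (f : ℝ → ℝ) : Set (ℝ × ℝ) :=
  {p | p.2 ∈ Set.uIoc 0 (f p.1)}

/-- Lebesgue measure on the strip `[0,1] × ℝ`. -/
abbrev stripMeasure : Measure (ℝ × ℝ) :=
  (volume.restrict (Set.Icc (0 : ℝ) 1)).prod volume

lemma uIoc_zero_symmDiff (x y : ℝ) :
    symmDiff (Set.uIoc 0 x) (Set.uIoc 0 y) = Set.uIoc x y := by
  ext z
  simp only [Set.mem_symmDiff, Set.mem_uIoc]
  grind

lemma measurableSet_subgraph {f : ℝ → ℝ} (hf : Measurable f) : MeasurableSet (subgraph f) := by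
  have : subgraph f = {p : ℝ × ℝ | 0 < p.2 ∧ p.2 ≤ f p.1} ∪ {p | f p.1 < p.2 ∧ p.2 ≤ 0} := by
    ext p
    simp [subgraph, Set.mem_uIoc]
  rw [this]
  have h1 : Measurable fun p : ℝ × ℝ => f p.1 := hf.comp measurable_fst
  exact ((measurableSet_lt measurable_const measurable_snd).inter
    (measurableSet_le measurable_snd h1)).union
    ((measurableSet_lt h1 measurable_snd).inter
    (measurableSet_le measurable_snd measurable_const))

lemma stripMeasure_symmDiff {f g : ℝ → ℝ} (hf : Measurable f) (hg : Measurable g) :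
    stripMeasure (symmDiff (subgraph f) (subgraph g)) =
      ∫⁻ x, edist (f x) (g x) ∂(volume.restrict (Set.Icc (0 : ℝ) 1)) := by
  rw [Measure.prod_apply ((measurableSet_subgraph hf).symmDiff (measurableSet_subgraph hg))]
  refine lintegral_congr fun x => ?_
  have : Prod.mk x ⁻¹' symmDiff (subgraph f) (subgraph g) = Set.uIoc (f x) (g x) := by
    rw [← uIoc_zero_symmDiff]; rfl
  rw [this, Real.volume_uIoc, edist_comm, edist_dist, Real.dist_eq]

lemma L1.measurable (f : L1) : Measurable (f : ℝ → ℝ) :=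
  (Lp.stronglyMeasurable f).measurable

lemma stripMeasure_symmDiff_L1 (f g : L1) :
    stripMeasure (symmDiff (subgraph f) (subgraph g)) = edist f g := by
  rw [stripMeasure_symmDiff f.measurable g.measurable, MeasureTheory.L1.edist_def]

lemma stripMeasure_subgraph_ne_top (f : L1) : stripMeasure (subgraph f) ≠ ∞ := by
  have h0 : subgraph (fun _ => 0) = ∅ := by ext p; simp [subgraph]
  have h := stripMeasure_symmDiff f.measurable (measurable_const (a := (0 : ℝ)))
  rw [h0, ← Set.bot_eq_empty, symmDiff_bot] at h
  rw [h]
  simpa [edist_zero_right] using (MeasureTheory.L1.integrable_coeFn f).2.ne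

lemma stripMeasure_real_add (f g : L1) :
    stripMeasure.real (subgraph f) + stripMeasure.real (subgraph g) -
      2 * stripMeasure.real (subgraph f ∩ subgraph g) = dist f g := by
  have hf := measurableSet_subgraph f.measurable
  have hg := measurableSet_subgraph g.measurable
  have hff := stripMeasure_subgraph_ne_top f
  have hgf := stripMeasure_subgraph_ne_top g
  have h1 := measureReal_sdiff_add_inter (μ := stripMeasure) (s := subgraph f) hg hff
  have h2 := measureReal_sdiff_add_inter (μ := stripMeasure) (s := subgraph g) hf hgf
  have h3 := measureReal_symmDiff_eq (μ := stripMeasure) hf hg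
    hff hgf
  rw [Measure.real, stripMeasure_symmDiff_L1, ← dist_edist] at h3
  rw [Set.inter_comm] at h2
  linarith


/-! ### Elementary estimates for the cone metric -/

lemma half_min_le_one_sub_exp {z : ℝ} (hz : 0 ≤ z) : min 1 z / 2 ≤ 1 - Real.exp (-z) := by
  have h1 : Real.exp (-z) * (1 + z) ≤ 1 := by
    have := Real.add_one_le_exp z
    calc Real.exp (-z) * (1 + z) ≤ Real.exp (-z) * Real.exp z := by gcongr; linarith
      _ = 1 := by rw [← Real.exp_add]; simp
  have h2 := Real.exp_pos (-z)
  rcases le_total 1 z with h | h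
  · rw [min_eq_left h]
    nlinarith
  · rw [min_eq_right h]
    by_contra! hlt
    nlinarith

lemma one_sub_exp_le_min (z : ℝ) : 1 - Real.exp (-z) ≤ min 1 z :=
  le_min (by linarith [Real.exp_pos (-z)]) (by linarith [Real.add_one_le_exp (-z)])

/-- The cone distance is comparable to `|s - t| + 2 min(s, t) k`, where
`k = sin(min(π, d) / 2)`; this rests on the identity `D² = (s - t)² + 4 s t k²`. -/
lemma cone_bounds {s t d : ℝ} (hs : 0 < s) (ht : 0 < t) (hd : 0 ≤ d) :
    ∃ k : ℝ, min Real.pi d / Real.pi ≤ k ∧ k ≤ 1 ∧ k ≤ d / 2 ∧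
      |s - t| ≤ √(s ^ 2 + t ^ 2 - 2 * s * t * Real.cos (min Real.pi d)) ∧
      2 * min s t * k ≤ √(s ^ 2 + t ^ 2 - 2 * s * t * Real.cos (min Real.pi d)) ∧
      √(s ^ 2 + t ^ 2 - 2 * s * t * Real.cos (min Real.pi d)) ≤ |s - t| + 2 * min s t * k := by
  have hπ := Real.pi_pos
  set θ := min Real.pi d with hθ
  have hθ0 : 0 ≤ θ := le_min hπ.le hd
  have hθd : θ ≤ d := min_le_right _ _
  have hθπ : θ ≤ Real.pi := min_le_left _ _
  have hk := Real.mul_le_sin (x := θ / 2) (by linarith) (by linarith)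
  have hk' : θ / Real.pi ≤ Real.sin (θ / 2) := by
    calc θ / Real.pi = 2 / Real.pi * (θ / 2) := by ring
      _ ≤ _ := hk
  have hk0 : 0 ≤ Real.sin (θ / 2) := le_trans (by positivity) hk'
  have hk1 := Real.sin_le_one (θ / 2)
  have hk2 := Real.sin_le (x := θ / 2) (by linarith)
  have hcos : Real.cos θ = 1 - 2 * Real.sin (θ / 2) ^ 2 := by
    have h := Real.cos_two_mul (θ / 2)
    rw [mul_div_cancel₀ θ (two_ne_zero)] at h
    rw [h, Real.cos_sq']
    ring
  refine ⟨Real.sin (θ / 2), hk', hk1, by linarith, ?_⟩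
  generalize Real.sin (θ / 2) = k at *
  have hD : s ^ 2 + t ^ 2 - 2 * s * t * Real.cos θ = (s - t) ^ 2 + 4 * (s * t) * k ^ 2 := by
    rw [hcos]; ring
  rw [hD]
  have hm0 : 0 < min s t := lt_min hs ht
  have hr0 := abs_nonneg (s - t)
  have hst : s * t = min s t * (min s t + |s - t|) := by
    rcases le_total s t with h | h
    · rw [min_eq_left h, abs_of_nonpos (by linarith)]; ring
    · rw [min_eq_right h, abs_of_nonneg (by linarith)]; ring
  rw [hst, ← sq_abs (s - t)]
  generalize min s t = m at *
  generalize |s - t| = r at *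
  have hmr : 0 ≤ m * r := by positivity
  refine ⟨Real.le_sqrt_of_sq_le ?_, Real.le_sqrt_of_sq_le ?_, Real.sqrt_le_iff.2 ⟨by positivity, ?_⟩⟩
  · nlinarith [mul_nonneg (mul_nonneg hm0.le (add_nonneg hm0.le hr0)) (sq_nonneg k)]
  · nlinarith [mul_nonneg hmr (sq_nonneg k), sq_nonneg r]
  · nlinarith [mul_nonneg hmr (mul_nonneg hk0 (sub_nonneg.2 hk1))]

/-- Comparison of the cone distance with the distance of two scaled Poisson densities, where
`p` and `q` are the measures of the two halves of the symmetric difference of the intensity sets. -/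
lemma cone_compare {s t p q d c : ℝ} (hs : 0 < s) (ht : 0 < t) (hp : 0 ≤ p) (hq : 0 ≤ q)
    (hd : 0 ≤ d) (hc : 1 ≤ c) (h1 : d ≤ p + q) (h2 : p + q ≤ c * d) :
    1 / 5 * √(s ^ 2 + t ^ 2 - 2 * s * t * Real.cos (min Real.pi d)) ≤
        s + t - 2 * min (s * Real.exp (-p)) (t * Real.exp (-q)) ∧
      s + t - 2 * min (s * Real.exp (-p)) (t * Real.exp (-q)) ≤
        25 * c * (1 / 5) * √(s ^ 2 + t ^ 2 - 2 * s * t * Real.cos (min Real.pi d)) := by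
  obtain ⟨k, hk, hk1, hkd, hD1, hD2, hD3⟩ := cone_bounds hs ht hd
  generalize √(s ^ 2 + t ^ 2 - 2 * s * t * Real.cos (min Real.pi d)) = D at *
  have hπ := Real.pi_pos
  have hk0 : 0 ≤ k := le_trans (div_nonneg (le_min hπ.le hd) hπ.le) hk
  have hm0 : 0 < min s t := lt_min hs ht
  have hms : min s t ≤ s := min_le_left _ _
  have hmt : min s t ≤ t := min_le_right _ _
  have hr : |s - t| = s + t - 2 * min s t := by
    rcases le_total s t with h | h
    · rw [min_eq_left h, abs_of_nonpos (by linarith)]; ring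
    · rw [min_eq_right h, abs_of_nonneg (by linarith)]; ring
  have hP0 : Real.exp (-p) ≤ 1 := Real.exp_le_one_iff.2 (by linarith)
  have hQ0 : Real.exp (-q) ≤ 1 := Real.exp_le_one_iff.2 (by linarith)
  have hD0 : 0 ≤ D := (abs_nonneg _).trans hD1
  constructor
  · have hN1 : |s - t| ≤ s + t - 2 * min (s * Real.exp (-p)) (t * Real.exp (-q)) := by
      have : min (s * Real.exp (-p)) (t * Real.exp (-q)) ≤ min s t :=
        min_le_min (by nlinarith) (by nlinarith)
      linarith
    have key : ∀ z, k ≤ z → k / 2 ≤ 1 - Real.exp (-z) := fun z hz => by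
      have := half_min_le_one_sub_exp (hk0.trans hz)
      have : k ≤ min 1 z := le_min hk1 hz
      linarith
    -- The larger of `p` and `q` is at least `d / 2 ≥ k`.
    have hN2 : min s t * k - |s - t| ≤
        s + t - 2 * min (s * Real.exp (-p)) (t * Real.exp (-q)) := by
      have hsr := neg_abs_le (s - t)
      have hsr' := le_abs_self (s - t)
      rcases le_total q p with h | h
      · have := min_le_left (s * Real.exp (-p)) (t * Real.exp (-q))
        have := key p (by linarith)
        nlinarith
      · have := min_le_right (s * Real.exp (-p)) (t * Real.exp (-q))
        have := key q (by linarith)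
        nlinarith
    linarith
  · have hθ : min 1 (c * d) ≤ c * (4 * k) := by
      have h4 : min Real.pi d ≤ 4 * k := by
        rw [div_le_iff₀ hπ] at hk
        nlinarith [Real.pi_le_four]
      have h5 : min 1 (c * d) ≤ c * min Real.pi d := by
        rcases le_total Real.pi d with h | h
        · rw [min_eq_left h]
          have := min_le_left 1 (c * d)
          nlinarith [Real.pi_gt_three]
        · rw [min_eq_right h]
          exact min_le_right _ _
      exact h5.trans (by gcongr)
    have key : ∀ z, z ≤ c * d → 1 - Real.exp (-z) ≤ c * (4 * k) := fun z hz =>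
      (one_sub_exp_le_min z).trans ((min_le_min_left _ hz).trans hθ)
    have hp' := key p (by linarith)
    have hq' := key q (by linarith)
    have hmin : min s t * (1 - c * (4 * k)) ≤
        min (s * Real.exp (-p)) (t * Real.exp (-q)) := by
      refine le_min ?_ ?_
      · calc _ ≤ min s t * Real.exp (-p) := by gcongr; linarith
          _ ≤ _ := by gcongr
      · calc _ ≤ min s t * Real.exp (-q) := by gcongr; linarith
          _ ≤ _ := by gcongr
    have : c * (2 * min s t * k) ≤ c * D := by gcongr
    nlinarith

/-! ### The embedding of the cone -/

/-- The map `(s, f) ↦ s · g(f)`, where `g(f)` is the Poisson density of the subgraph of `f`;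
`p` and `q` are the measures of the differences `f \ g` and `g \ f` of the two subgraphs. -/
lemma exists_truncation :
    ∃ F : ℝ → L1 → L1, ∀ (s t : ℝ) (f g : L1), 0 < s → 0 < t →
      ∃ p q : ℝ, 0 ≤ p ∧ 0 ≤ q ∧ p + q = dist f g ∧
        dist (F s f) (F t g) = s + t - 2 * min (s * Real.exp (-p)) (t * Real.exp (-q)) := by
  obtain ⟨J, hJ⟩ := exists_isometric_L1 (fockMeasure stripMeasure)
  refine ⟨fun s f => J fun y => s * fockVec stripMeasure (subgraph f) y, fun s t f g hs ht => ?_⟩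
  have hf := measurableSet_subgraph f.measurable
  have hg := measurableSet_subgraph g.measurable
  have hff := stripMeasure_subgraph_ne_top f
  have hgf := stripMeasure_subgraph_ne_top g
  have hadd := stripMeasure_real_add f g
  refine ⟨stripMeasure.real (subgraph f) - stripMeasure.real (subgraph f ∩ subgraph g),
    stripMeasure.real (subgraph g) - stripMeasure.real (subgraph f ∩ subgraph g),
    sub_nonneg.2 (measureReal_mono Set.inter_subset_left hff),
    sub_nonneg.2 (measureReal_mono Set.inter_subset_right hgf), by linarith, ?_⟩
  have hJ' := hJ _ _ ((integrable_fockVec stripMeasure hf hff).const_mul s)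
    ((integrable_fockVec stripMeasure hg hgf).const_mul t)
  dsimp only
  rw [hJ',
    integral_abs_fockVec_sub _ hf hg hff hgf hs.le ht.le, mul_assoc (2 : ℝ),
    min_mul_of_nonneg _ _ (Real.exp_pos _).le, mul_assoc s, mul_assoc t, ← Real.exp_add,
    ← Real.exp_add]
  ring_nf

theorem statement7 :
    ∃ C : ℝ, 0 < C ∧
      ∀ (X : Type*) [MetricSpace X],
        distortion (coneD (dist : X → X → ℝ)) (dist : L1 → L1 → ℝ) ≤
          ENNReal.ofReal C * distortion (dist : X → X → ℝ) (dist : L1 → L1 → ℝ) := by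
  obtain ⟨F, hF⟩ := exists_truncation
  refine ⟨25, by norm_num, fun X _ => ?_⟩
  rw [← ENNReal.div_le_iff' (by simp) (by simp)]
  refine le_sInf ?_
  rintro _ ⟨c, hc, rfl, σ, f, hσ, hf⟩
  rw [ENNReal.div_le_iff' (by simp) (by simp),
    ← ENNReal.ofReal_mul (by norm_num)]
  -- Dividing `f` by its scale `σ` gives `d ≤ ‖f x - f y‖ ≤ c d`, as `cone_compare` requires.
  refine sInf_le ⟨25 * c, by linarith, rfl, 1 / 5, fun x => F x.1.1 (σ⁻¹ • f x.1.2),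
    by norm_num, fun x y => ?_⟩
  obtain ⟨p, q, hp, hq, hpq, hdist⟩ := hF x.1.1 y.1.1 (σ⁻¹ • f x.1.2) (σ⁻¹ • f y.1.2) x.2 y.2
  have hL : dist (f x.1.2) (f y.1.2) = σ * (p + q) := by
    rw [hpq, dist_smul₀, norm_inv, Real.norm_of_nonneg hσ.le, mul_inv_cancel_left₀ hσ.ne']
  obtain ⟨h1, h2⟩ := hf x.1.2 y.1.2
  rw [hL] at h1 h2
  rw [hdist]
  exact cone_compare x.2 y.2 hp hq dist_nonneg hc (le_of_mul_le_mul_left h1 hσ)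
    (le_of_mul_le_mul_left (by linarith) hσ)

end
end

section
/- Fix D ∈ [1,∞) and metric spaces (X,d_X) and (Y,d_Y). Suppose f : X → Y satisfies d_X(x,y) ≤ d_Y(f(x),f(y)) ≤ D·d_X(x,y) for all x,y ∈ X. Then for every pair of distinct points (s,x),(t,y) ∈ (0,∞)×X one has 1 ≤ d_{Cone(Y)}((s,f(x)),(t,f(y)))/d_{Cone(X)}((s,x),(t,y)) ≤ D. -/
/-!
Writing `d² = (s - t)² + 4 s t sin²(θ/2)` for the squared cone distance at angle
`θ = min {π, d}`, both inequalities become statements about `sin (θ/2)` with `θ/2 ∈ [0, π/2]`.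
Let `a` and `b` be the angles at `x, y` and at `f x, f y`; truncation at `π` preserves
`a ≤ b ≤ D a` because `D ≥ 1`. The lower bound is the monotonicity of
`sin` on `[0, π/2]`; the upper bound is `sin (b/2) ≤ D sin (a/2)`, which holds because `sin` is
concave and vanishes at `0`, so that `sin u / u` decreases (`sin_half_le_mul_sin_half`). The radial
term `(s - t)²` only grows when multiplied by `D²`.
-/

/-!
Statement 8 (Fact 3.8 of Mendel–Naor): comparison of cone distances under a
bi-Lipschitz map with lower constant 1 and upper constant `D`.
-/

noncomputable section

theorem coneDist_eq_sqrt_sin {X : Type*} (dX : X → X → ℝ) (s t : ℝ) (x y : X) :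
    coneDist dX (s, x) (t, y) =
      Real.sqrt ((s - t) ^ 2 + 4 * s * t * Real.sin (min Real.pi (dX x y) / 2) ^ 2) := by
  unfold coneDist
  congr 1
  have h := Real.cos_sq (min Real.pi (dX x y) / 2)
  rw [mul_div_cancel₀ _ (two_ne_zero' ℝ)] at h
  have h2 := Real.sin_sq_add_cos_sq (min Real.pi (dX x y) / 2)
  dsimp only
  linear_combination 4 * s * t * h - 4 * s * t * h2

theorem sin_half_le_mul_sin_half {a b D : ℝ} (ha : 0 ≤ a) (hab : a ≤ b) (hb : b ≤ Real.pi)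
    (hbD : b ≤ D * a) : Real.sin (b / 2) ≤ D * Real.sin (a / 2) := by
  rcases ha.eq_or_lt with rfl | ha
  · obtain rfl : b = 0 := by linarith
    simp
  have hb0 : 0 < b := ha.trans_le hab
  -- Concavity at `a/2 = (1 - a/b) * 0 + (a/b) * (b/2)`.
  have hc := strictConcaveOn_sin_Icc.concaveOn.2
    (show (0 : ℝ) ∈ Set.Icc 0 Real.pi from ⟨le_rfl, Real.pi_pos.le⟩)
    (show b / 2 ∈ Set.Icc 0 Real.pi from ⟨by linarith, by linarith⟩)
    (show 0 ≤ 1 - a / b by rw [sub_nonneg, div_le_one hb0]; exact hab)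
    (show 0 ≤ a / b by positivity) (by ring)
  have he : a / b * (b / 2) = a / 2 := by field_simp
  simp only [smul_eq_mul, Real.sin_zero, mul_zero, zero_add, he] at hc
  rw [div_mul_eq_mul_div, div_le_iff₀ hb0] at hc
  have hs : 0 ≤ Real.sin (a / 2) :=
    Real.sin_nonneg_of_nonneg_of_le_pi (by linarith) (by linarith)
  have h2 := mul_le_mul_of_nonneg_left hbD hs
  refine le_of_mul_le_mul_left ?_ ha
  linarith

theorem statement8 {X Y : Type*} [MetricSpace X] [MetricSpace Y] (D : ℝ) (hD : 1 ≤ D)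
    (f : X → Y)
    (hf : ∀ x y : X, dist x y ≤ dist (f x) (f y) ∧ dist (f x) (f y) ≤ D * dist x y)
    (s t : ℝ) (hs : 0 < s) (ht : 0 < t) (x y : X) (hne : (s, x) ≠ (t, y)) :
    1 ≤ coneDist (dist : Y → Y → ℝ) (s, f x) (t, f y) /
          coneDist (dist : X → X → ℝ) (s, x) (t, y) ∧
      coneDist (dist : Y → Y → ℝ) (s, f x) (t, f y) /
          coneDist (dist : X → X → ℝ) (s, x) (t, y) ≤ D := by
  obtain ⟨h1, h2⟩ := hf x y
  rw [coneDist_eq_sqrt_sin, coneDist_eq_sqrt_sin]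
  have hpi := Real.pi_pos
  have ha0 : 0 ≤ min Real.pi (dist x y) := le_min hpi.le dist_nonneg
  have hapi : min Real.pi (dist x y) ≤ Real.pi := min_le_left _ _
  have hbpi : min Real.pi (dist (f x) (f y)) ≤ Real.pi := min_le_left _ _
  have hab : min Real.pi (dist x y) ≤ min Real.pi (dist (f x) (f y)) := min_le_min_left _ h1
  have hbD : min Real.pi (dist (f x) (f y)) ≤ D * min Real.pi (dist x y) := by
    rw [mul_min_of_nonneg _ _ (by linarith)]
    exact min_le_min (le_mul_of_one_le_left hpi.le hD) h2
  have hapos : s = t → 0 < min Real.pi (dist x y) := fun hst =>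
    lt_min hpi (dist_pos.2 fun hxy => hne (by rw [hst, hxy]))
  generalize min Real.pi (dist x y) = a at *
  generalize min Real.pi (dist (f x) (f y)) = b at *
  have hup := sin_half_le_mul_sin_half ha0 hab hbpi hbD
  have hlow : Real.sin (a / 2) ≤ Real.sin (b / 2) :=
    Real.sin_le_sin_of_le_of_le_pi_div_two (by linarith) (by linarith) (by linarith)
  have hsa : 0 ≤ Real.sin (a / 2) :=
    Real.sin_nonneg_of_nonneg_of_le_pi (by linarith) (by linarith)
  have hst : 0 < s * t := mul_pos hs ht
  have hpos : 0 < (s - t) ^ 2 + 4 * s * t * Real.sin (a / 2) ^ 2 := by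
    by_cases h : s = t
    · have := Real.sin_pos_of_pos_of_lt_pi (half_pos (hapos h)) (by linarith)
      positivity
    · have := sq_pos_of_ne_zero (sub_ne_zero.2 h)
      positivity
  rw [one_le_div (Real.sqrt_pos.2 hpos), div_le_iff₀ (Real.sqrt_pos.2 hpos)]
  constructor
  · gcongr
  · have hD0 : 0 ≤ D := by linarith
    refine Real.sqrt_le_iff.2 ⟨by positivity, ?_⟩
    rw [mul_pow, Real.sq_sqrt hpos.le]
    have hsq : Real.sin (b / 2) ^ 2 ≤ (D * Real.sin (a / 2)) ^ 2 :=
      pow_le_pow_left₀ (hsa.trans hlow) hup 2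
    have hD2 : (s - t) ^ 2 ≤ D ^ 2 * (s - t) ^ 2 :=
      le_mul_of_one_le_left (sq_nonneg _) (one_le_pow₀ hD)
    have := mul_le_mul_of_nonneg_left hsq (show 0 ≤ 4 * (s * t) by positivity)
    linarith

end
end
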